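/- arXiv:0906.1632 — 2 statements merged into one kernel-verified Lean document; each statement's English description precedes it below -/
import Mathlib

section
/- For every Z ∈ L^∞_T there exists a unique (up to a.s. equality) positive martingale (M_s)_{s=t,…,T} ∈ 𝓜_t attaining the essential infimum essinf_{(M_s)∈𝓜_t} { Σ_{s=t}^T E[u_s^*(M_s) | 𝓕_t] + E[M_T Z | 𝓕_t] }. -/
open MeasureTheory Filter

variable {Ω : Type*}

/-- `X ∈ L^∞(m)`: `m`-measurable and (essentially) bounded. -/
def MeasBdd (m : MeasurableSpace Ω) (X : Ω → ℝ) : Prop :=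
  Measurable[m] X ∧ ∃ C : ℝ, ∀ ω, |X ω| ≤ C

/-- `u` is a utility function (strictly increasing, strictly concave, `C¹`) with
derivative `u'` satisfying `u 0 = 0`, `u' 0 = 1`, `u'(+∞) = 0`, `u'(-∞) = +∞`. -/
structure IsUtility (u u' : ℝ → ℝ) : Prop where
  strictMono : StrictMono u
  strictConcave : StrictConcaveOn ℝ Set.univ u
  hasDeriv : ∀ x, HasDerivAt u (u' x) x
  derivCont : Continuous u'
  zero : u 0 = 0
  deriv_zero : u' 0 = 1
  deriv_top : Tendsto u' atTop (nhds 0)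
  deriv_bot : Tendsto u' atBot atTop

/-- A one-product diversification of `Z` at time `t`: an adapted family `(X s)`,
`s = t,…,T`, of essentially bounded random variables summing to `Z`. -/
def IsDiv1 {m0 : MeasurableSpace Ω} (P : Measure Ω) (ℱ : Filtration ℕ m0)
    (t T : ℕ) (Z : Ω → ℝ) (X : ℕ → Ω → ℝ) : Prop :=
  (∀ s ∈ Finset.Icc t T, MeasBdd (ℱ s) (X s)) ∧
  ∀ᵐ ω ∂P, (∑ s ∈ Finset.Icc t T, X s ω) = Z ω

/-- The total conditional expected utility `∑_{s=t}^T E[u_s(X_s) | 𝓕_t]`. -/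
noncomputable def utilSum1 {m0 : MeasurableSpace Ω} (P : Measure Ω) (ℱ : Filtration ℕ m0)
    (u : ℕ → ℝ → ℝ) (t T : ℕ) (X : ℕ → Ω → ℝ) : Ω → ℝ :=
  fun ω => ∑ s ∈ Finset.Icc t T, (P[fun ω' => u s (X s ω') | ℱ t]) ω

/-- The convex conjugate `u^*(y) = sup_{x ∈ ℝ} (u(x) - x y)` (finite for `y > 0`). -/
noncomputable def uStar (u : ℝ → ℝ) (y : ℝ) : ℝ :=
  sSup {z | ∃ x : ℝ, z = u x - x * y}

/-- `(M s)_{s=t,…,T}` is a positive integrable martingale w.r.t. `(ℱ s)`. -/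
def IsPosMart {m0 : MeasurableSpace Ω} (P : Measure Ω) (ℱ : Filtration ℕ m0)
    (t T : ℕ) (M : ℕ → Ω → ℝ) : Prop :=
  (∀ s ∈ Finset.Icc t T,
    Measurable[ℱ s] (M s) ∧ Integrable (M s) P ∧ ∀ᵐ ω ∂P, 0 < M s ω) ∧
  ∀ r ∈ Finset.Icc t T, ∀ s ∈ Finset.Icc t T, r ≤ s →
    (P[M s | ℱ r]) =ᵐ[P] M r

/-- The dual objective
`Ψ_t(M) = Σ_{s=t}^T E[u_s^*(M_s)|𝓕_t] + E[M_T Z|𝓕_t]`. -/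
noncomputable def dualObj {m0 : MeasurableSpace Ω} (P : Measure Ω) (ℱ : Filtration ℕ m0)
    (u : ℕ → ℝ → ℝ) (t T : ℕ) (Z : Ω → ℝ) (M : ℕ → Ω → ℝ) : Ω → ℝ :=
  fun ω => (∑ s ∈ Finset.Icc t T, (P[fun ω' => uStar (u s) (M s ω') | ℱ t]) ω) +
    (P[fun ω' => M T ω' * Z ω' | ℱ t]) ω

/-!
The conjugates `uₛ*` are strictly convex and superlinear, so two martingales of nearly minimal
expected loss whose midpoint cannot do better must be close in `L¹`. Hence a minimizing sequence is
Cauchy at time `T`, and its `L¹` limit closes a martingale along which, after passing to a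
subsequence, all components converge almost surely; Fatou's lemma shows that the limit is minimal.
The limit is strictly positive because `uₛ*` has slope `-∞` at `0`: where `Mₛ` is close to `0`,
moving a little towards the constant martingale `1` would lower the loss at an unbounded rate.
Pasting competitors on `𝓕_t`-measurable sets upgrades minimality of the expectation to almost sure
minimality of the conditional expectation, and strict convexity gives uniqueness.
-/

section MidpointDefect

variable {s : Set ℝ} {f : ℝ → ℝ} {x y : ℝ}

/-- The gap in midpoint convexity of `f` at the pair `x, y`. It measures quantitatively how
strictly convex `f` is between the two points. -/
noncomputable def midpointDefect (f : ℝ → ℝ) (x y : ℝ) : ℝ :=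
  (f x + f y) / 2 - f ((x + y) / 2)

theorem midpointDefect_comm (f : ℝ → ℝ) (x y : ℝ) :
    midpointDefect f x y = midpointDefect f y x := by
  simp only [midpointDefect, add_comm]

theorem midpointDefect_nonneg (hf : ConvexOn ℝ s f) (hx : x ∈ s) (hy : y ∈ s) :
    0 ≤ midpointDefect f x y := by
  have h := hf.2 hx hy one_half_pos.le one_half_pos.le (add_halves 1)
  simp only [smul_eq_mul] at h
  rw [show 1 / 2 * x + 1 / 2 * y = (x + y) / 2 by ring] at h
  unfold midpointDefect
  linarith

theorem midpointDefect_pos (hf : StrictConvexOn ℝ s f) (hx : x ∈ s) (hy : y ∈ s)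
    (hxy : x ≠ y) : 0 < midpointDefect f x y := by
  have h := hf.2 hx hy hxy one_half_pos one_half_pos (add_halves 1)
  simp only [smul_eq_mul] at h
  rw [show 1 / 2 * x + 1 / 2 * y = (x + y) / 2 by ring] at h
  unfold midpointDefect
  linarith

theorem midpointDefect_sub_add_mono (hf : ConvexOn ℝ s f) {m d e : ℝ} (hd : 0 ≤ d) (hde : d ≤ e)
    (hsub : m - e ∈ s) (hadd : m + e ∈ s) :
    midpointDefect f (m - d) (m + d) ≤ midpointDefect f (m - e) (m + e) := by
  rcases hd.eq_or_lt with rfl | hd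
  · simpa [midpointDefect] using midpointDefect_nonneg hf hsub hadd
  have he : 0 < e := hd.trans_le hde
  have hα : 0 ≤ (e + d) / (2 * e) := by positivity
  have hβ : 0 ≤ (e - d) / (2 * e) := div_nonneg (by linarith) (by linarith)
  have hαβ : (e + d) / (2 * e) + (e - d) / (2 * e) = 1 := by field_simp; ring
  have hleft := hf.2 hsub hadd hα hβ hαβ
  have hright := hf.2 hsub hadd hβ hα (by rwa [add_comm])
  simp only [smul_eq_mul] at hleft hright
  rw [show (e + d) / (2 * e) * (m - e) + (e - d) / (2 * e) * (m + e) = m - d by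
    field_simp; ring] at hleft
  rw [show (e - d) / (2 * e) * (m - e) + (e + d) / (2 * e) * (m + e) = m + d by
    field_simp; ring] at hright
  rw [eq_sub_of_add_eq hαβ] at hleft hright
  simp only [midpointDefect, show ∀ r : ℝ, (m - r + (m + r)) / 2 = m by intro r; ring]
  linarith

theorem exists_pos_le_midpointDefect (hf : StrictConvexOn ℝ (Set.Ioi 0) f) {ε : ℝ} (hε : 0 < ε)
    (K : ℝ) :
    ∃ c > 0, ∀ x y, 0 < x → x + ε ≤ y → y ≤ K → c ≤ midpointDefect f x y := by
  have hcont : ContinuousOn f (Set.Ioi 0) := hf.convexOn.continuousOn isOpen_Ioi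
  have hcont' : ContinuousOn (fun m => midpointDefect f (m - ε / 4) (m + ε / 4))
      (Set.Icc (ε / 2) K) := by
    have hcomp : ∀ g : ℝ → ℝ, Continuous g → (∀ m ∈ Set.Icc (ε / 2) K, 0 < g m) →
        ContinuousOn (fun m => f (g m)) (Set.Icc (ε / 2) K) :=
      fun g hg hpos => hcont.comp hg.continuousOn hpos
    refine (((hcomp _ (by fun_prop) ?_).add (hcomp _ (by fun_prop) ?_)).div_const 2).sub
      (hcomp _ (by fun_prop) ?_) <;> intro m hm <;> linarith [hm.1]
  obtain ⟨c, hc, hle⟩ := isCompact_Icc.exists_forall_le' hcont' (a := 0) fun m hm =>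
    midpointDefect_pos hf (Set.mem_Ioi.2 (by linarith [hm.1])) (Set.mem_Ioi.2 (by linarith [hm.1]))
      (by linarith)
  refine ⟨c, hc, fun x y hx hxy hy => (hle ((x + y) / 2) ⟨by linarith, by linarith⟩).trans ?_⟩
  have hsub : (x + y) / 2 - (y - x) / 2 = x := by ring
  have hadd : (x + y) / 2 + (y - x) / 2 = y := by ring
  have hmono := midpointDefect_sub_add_mono hf.convexOn (m := (x + y) / 2) (d := ε / 4)
    (e := (y - x) / 2) (by positivity) (by linarith) (by rw [hsub]; exact hx)
    (by rw [hadd]; exact Set.mem_Ioi.2 (by linarith))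
  rwa [hsub, hadd] at hmono

end MidpointDefect

/-- The properties of the convex conjugate of a utility function on which the dual problem rests.
`steep` encodes `f' (0+) = -∞` by tangent lines of arbitrarily negative slope `-x` touching the
graph in `(0, 1]`; `superlinear` says `f y / y → ∞`. Nothing is required outside `(0, ∞)`. -/
structure IsDualUtility (f : ℝ → ℝ) : Prop where
  strictConvexOn : StrictConvexOn ℝ (Set.Ioi 0) f
  nonneg : ∀ y, 0 < y → 0 ≤ f y
  one : f 1 = 0
  superlinear : ∀ c, ∃ b, ∀ y, 0 < y → c * y + b ≤ f y
  steep : ∀ x, 0 < x → ∃ l ∈ Set.Ioc (0 : ℝ) 1, ∀ y, 0 < y → f l + x * (l - y) ≤ f y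

namespace IsDualUtility

variable {f : ℝ → ℝ}

theorem continuousOn (hf : IsDualUtility f) : ContinuousOn f (Set.Ioi 0) :=
  hf.strictConvexOn.convexOn.continuousOn isOpen_Ioi

theorem midpointDefect_nonneg (hf : IsDualUtility f) {x y : ℝ} (hx : 0 < x) (hy : 0 < y) :
    0 ≤ midpointDefect f x y :=
  _root_.midpointDefect_nonneg hf.strictConvexOn.convexOn hx hy

theorem exists_forall_gt_le_mul (hf : IsDualUtility f) {ε : ℝ} (hε : 0 < ε) :
    ∃ K, 0 ≤ K ∧ ∀ y, K < y → y ≤ ε * f y := by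
  obtain ⟨b, hb⟩ := hf.superlinear (2 / ε)
  refine ⟨max 0 (-(ε * b)), le_max_left _ _, fun y hy => ?_⟩
  obtain ⟨hy0, hyb⟩ := max_lt_iff.1 hy
  have hmul := mul_le_mul_of_nonneg_left (hb y hy0) hε.le
  rw [show ε * (2 / ε * y + b) = 2 * y + ε * b by field_simp] at hmul
  linarith

/-- Far apart points are far apart either because one of them has a large value of `f`
(superlinearity) or because the midpoint defect is bounded below (strict convexity). -/
theorem abs_sub_le (hf : IsDualUtility f) {ε : ℝ} (hε : 0 < ε) :
    ∃ C, 0 ≤ C ∧ ∀ x y, 0 < x → 0 < y →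
      |x - y| ≤ ε * (1 + f x + f y) + C * midpointDefect f x y := by
  obtain ⟨K, hK, hlarge⟩ := hf.exists_forall_gt_le_mul hε
  obtain ⟨c, hc, hdefect⟩ := exists_pos_le_midpointDefect hf.strictConvexOn hε K
  refine ⟨K / c, by positivity, fun x y hx hy => ?_⟩
  wlog hxy : x ≤ y generalizing x y
  · have h := this y x hy hx (not_le.1 hxy).le
    rw [abs_sub_comm, midpointDefect_comm]
    linarith
  rw [abs_sub_comm, abs_of_nonneg (sub_nonneg.2 hxy)]
  have hfx := mul_nonneg hε.le (hf.nonneg x hx)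
  have hfy := mul_nonneg hε.le (hf.nonneg y hy)
  have hdef := mul_nonneg (div_nonneg hK hc.le) (hf.midpointDefect_nonneg hx hy)
  rcases lt_or_ge K y with hKy | hyK
  · linarith [hlarge y hKy]
  rcases lt_or_ge (y - x) ε with hclose | hfar
  · linarith
  · have hKc : K ≤ K / c * midpointDefect f x y :=
      calc K = K / c * c := by field_simp
        _ ≤ K / c * midpointDefect f x y :=
          mul_le_mul_of_nonneg_left (hdefect x y hx (by linarith) hyK) (div_nonneg hK hc.le)
    linarith

theorem apply_convexComb_one_le (hf : IsDualUtility f) {l y : ℝ} (hl : l ∈ Set.Icc (0 : ℝ) 1)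
    (hy : 0 < y) : f ((1 - l) * y + l) ≤ f y := by
  have hconv := hf.strictConvexOn.convexOn.2 (Set.mem_Ioi.2 hy) (Set.mem_Ioi.2 one_pos)
    (sub_nonneg.2 hl.2) hl.1 (sub_add_cancel 1 l)
  simp only [smul_eq_mul, mul_one, hf.one, mul_zero, add_zero] at hconv
  linarith [mul_nonneg hl.1 (hf.nonneg y hy)]

theorem exists_mul_max_add_apply_convexComb_one_le (hf : IsDualUtility f) {x : ℝ} (hx : 0 < x) :
    ∃ l ∈ Set.Ioc (0 : ℝ) 1, ∀ y, 0 < y →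
      x * max (l - y) 0 + f ((1 - l) * y + l) ≤ f y := by
  obtain ⟨l, hl, htangent⟩ := hf.steep x hx
  refine ⟨l, hl, fun y hy => ?_⟩
  rcases le_total y l with hyl | hly
  · have hmem : (1 - l) * y + l ∈ Set.Icc l 1 :=
      ⟨by nlinarith [hl.2], by nlinarith [hl.1, hl.2]⟩
    have hmax : f ((1 - l) * y + l) ≤ max (f l) (f 1) :=
      hf.strictConvexOn.convexOn.le_max_of_mem_Icc hl.1 (Set.mem_Ioi.2 one_pos) hmem
    rw [hf.one, max_eq_left (hf.nonneg l hl.1)] at hmax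
    rw [max_eq_left (sub_nonneg.2 hyl)]
    linarith [htangent y hy]
  · rw [max_eq_right (sub_nonpos.2 hly), mul_zero, zero_add]
    exact hf.apply_convexComb_one_le ⟨hl.1.le, hl.2⟩ hy

end IsDualUtility

section Conjugate

variable {u u' : ℝ → ℝ}

theorem uStar_eq_of_forall_le {a y : ℝ} (h : ∀ x, u x - x * y ≤ u a - a * y) :
    uStar u y = u a - a * y :=
  IsGreatest.csSup_eq ⟨⟨a, rfl⟩, by rintro _ ⟨x, rfl⟩; exact h x⟩

namespace IsUtility

theorem lt_tangent (hu : IsUtility u u') {a x : ℝ} (hxa : x ≠ a) :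
    u x < u a + u' a * (x - a) := by
  rcases lt_or_gt_of_ne hxa with hlt | hgt
  · have h := StrictConcaveOn.lt_slope_of_hasDerivAt hu.strictConcave (Set.mem_univ x)
      (Set.mem_univ a) hlt (hu.hasDeriv a)
    rw [slope_def_field, lt_div_iff₀ (sub_pos.2 hlt)] at h
    linarith
  · have h := StrictConcaveOn.slope_lt_of_hasDerivAt hu.strictConcave (Set.mem_univ a)
      (Set.mem_univ x) hgt (hu.hasDeriv a)
    rw [slope_def_field, div_lt_iff₀ (sub_pos.2 hgt)] at h
    linarith

theorem le_tangent (hu : IsUtility u u') (a x : ℝ) : u x ≤ u a + u' a * (x - a) := by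
  rcases eq_or_ne x a with rfl | hxa
  · simp
  · exact (hu.lt_tangent hxa).le

theorem uStar_deriv (hu : IsUtility u u') (a : ℝ) : uStar u (u' a) = u a - a * u' a :=
  uStar_eq_of_forall_le fun x => by linarith [hu.le_tangent a x]

theorem exists_deriv_eq (hu : IsUtility u u') {y : ℝ} (hy : 0 < y) : ∃ a, u' a = y :=
  mem_range_of_exists_le_of_exists_ge hu.derivCont
    (hu.deriv_top.eventually (eventually_le_nhds hy)).exists
    (hu.deriv_bot.eventually (eventually_ge_atTop y)).exists

theorem le_uStar (hu : IsUtility u u') {y : ℝ} (hy : 0 < y) (x : ℝ) :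
    u x - x * y ≤ uStar u y := by
  obtain ⟨a, rfl⟩ := hu.exists_deriv_eq hy
  rw [hu.uStar_deriv]
  linarith [hu.le_tangent a x]

theorem lt_uStar (hu : IsUtility u u') {x y : ℝ} (hy : 0 < y) (hxy : u' x ≠ y) :
    u x - x * y < uStar u y := by
  obtain ⟨a, rfl⟩ := hu.exists_deriv_eq hy
  rw [hu.uStar_deriv]
  linarith [hu.lt_tangent (show x ≠ a from fun h => hxy (congrArg u' h))]

theorem deriv_pos (hu : IsUtility u u') (x : ℝ) : 0 < u' x := by
  linarith [hu.le_tangent x (x + 1), hu.strictMono (lt_add_one x)]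

theorem deriv_le_one (hu : IsUtility u u') {x : ℝ} (hx : 0 < x) : u' x ≤ 1 := by
  have hsum : 0 ≤ (1 - u' x) * x := by
    linarith [hu.le_tangent x 0, hu.le_tangent 0 x, hu.zero, hu.deriv_zero,
      show u' 0 * (x - 0) = x by rw [hu.deriv_zero]; ring]
  linarith [nonneg_of_mul_nonneg_left hsum hx]

/-- If `u' a` is the intermediate point, the affine function `y ↦ u a - a * y` touches `uStar u`
there and lies strictly below it elsewhere. -/
theorem strictConvexOn_uStar (hu : IsUtility u u') :
    StrictConvexOn ℝ (Set.Ioi 0) (uStar u) := by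
  refine ⟨convex_Ioi 0, fun x hx y hy hxy p q hp hq hpq => ?_⟩
  obtain ⟨a, ha⟩ := hu.exists_deriv_eq (convex_Ioi (0 : ℝ) hx hy hp.le hq.le hpq)
  have hax : u' a ≠ x := fun h => hxy <| by
    refine mul_left_cancel₀ hq.ne' ?_
    rw [h, smul_eq_mul, smul_eq_mul, eq_sub_of_add_eq hpq] at ha
    linarith
  have hbelow_x := mul_lt_mul_of_pos_left (hu.lt_uStar hx hax) hp
  have hbelow_y := mul_le_mul_of_nonneg_left (hu.le_uStar hy a) hq.le
  rw [← ha, hu.uStar_deriv, ha]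
  simp only [smul_eq_mul]
  calc u a - a * (p * x + q * y) = p * (u a - a * x) + q * (u a - a * y) := by
        linear_combination -(u a) * hpq
    _ < p * uStar u x + q * uStar u y := add_lt_add_of_lt_of_le hbelow_x hbelow_y

theorem isDualUtility_uStar (hu : IsUtility u u') : IsDualUtility (uStar u) where
  strictConvexOn := hu.strictConvexOn_uStar
  nonneg y hy := by simpa [hu.zero] using hu.le_uStar hy 0
  one := by simpa [hu.deriv_zero, hu.zero] using hu.uStar_deriv 0
  superlinear c := ⟨u (-c), fun y hy => by linarith [hu.le_uStar hy (-c)]⟩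
  steep x hx := ⟨u' x, ⟨hu.deriv_pos x, hu.deriv_le_one hx⟩, fun y hy => by
    rw [hu.uStar_deriv]
    linarith [hu.le_uStar hy x]⟩

end IsUtility

end Conjugate

section Integration

variable {m m0 : MeasurableSpace Ω} {P : Measure Ω}

theorem aestronglyMeasurable_comp_of_continuousOn {f : ℝ → ℝ} {s : Set ℝ} {X : Ω → ℝ}
    (hf : ContinuousOn f s) (hs : MeasurableSet s) (hX : AEMeasurable X P)
    (hmem : ∀ᵐ ω ∂P, X ω ∈ s) : AEStronglyMeasurable (fun ω => f (X ω)) P := by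
  have hmap : (P.map X).restrict s = P.map X :=
    Measure.restrict_eq_self_of_ae_mem ((ae_map_iff hX hs).2 hmem)
  have hfm : AEStronglyMeasurable f (P.map X) := hmap ▸ hf.aestronglyMeasurable hs
  exact hfm.comp_aemeasurable hX

theorem integrable_and_integral_le_of_tendsto {h : ℕ → Ω → ℝ} {g : Ω → ℝ} {I : ℝ}
    (hint : ∀ n, Integrable (h n) P) (hnonneg : ∀ n, 0 ≤ᵐ[P] h n)
    (hlim : ∀ᵐ ω ∂P, Tendsto (fun n => h n ω) atTop (nhds (g ω)))
    (hI : Tendsto (fun n => ∫ ω, h n ω ∂P) atTop (nhds I)) :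
    Integrable g P ∧ ∫ ω, g ω ∂P ≤ I := by
  have hg : 0 ≤ᵐ[P] g := by
    filter_upwards [hlim, ae_all_iff.2 hnonneg] with ω hω h0 using ge_of_tendsto' hω h0
  have hgm : AEStronglyMeasurable g P :=
    aestronglyMeasurable_of_tendsto_ae _ (fun n => (hint n).1) hlim
  have hI0 : 0 ≤ I := ge_of_tendsto' hI fun n => integral_nonneg_of_ae (hnonneg n)
  have hfatou : ∫⁻ ω, ENNReal.ofReal (g ω) ∂P ≤ ENNReal.ofReal I :=
    calc ∫⁻ ω, ENNReal.ofReal (g ω) ∂P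
        = ∫⁻ ω, liminf (fun n => ENNReal.ofReal (h n ω)) atTop ∂P := by
          refine lintegral_congr_ae ?_
          filter_upwards [hlim] with ω hω using
            ((ENNReal.continuous_ofReal.tendsto _).comp hω).liminf_eq.symm
      _ ≤ liminf (fun n => ∫⁻ ω, ENNReal.ofReal (h n ω) ∂P) atTop :=
          lintegral_liminf_le' fun n => (hint n).1.aemeasurable.ennreal_ofReal
      _ = ENNReal.ofReal I := by
          simp only [← ofReal_integral_eq_lintegral_ofReal (hint _) (hnonneg _)]
          exact ((ENNReal.continuous_ofReal.tendsto _).comp hI).liminf_eq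
  refine ⟨⟨hgm, ?_⟩, ?_⟩
  · rw [hasFiniteIntegral_iff_ofReal hg]
    exact hfatou.trans_lt ENNReal.ofReal_lt_top
  · rw [integral_eq_lintegral_of_nonneg_ae hg hgm]
    exact ENNReal.toReal_le_of_le_ofReal hI0 hfatou

theorem condExp_mono_of_forall_setIntegral_le [IsFiniteMeasure P] (hm : m ≤ m0) {X Y : Ω → ℝ}
    (hX : Integrable X P) (hY : Integrable Y P)
    (hle : ∀ A, MeasurableSet[m] A → ∫ ω in A, X ω ∂P ≤ ∫ ω in A, Y ω ∂P) :
    P[X | m] ≤ᵐ[P] P[Y | m] := by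
  refine ae_le_of_ae_le_trim (hm := hm) ?_
  refine ae_le_of_forall_setIntegral_le (integrable_condExp.trim hm stronglyMeasurable_condExp)
    (integrable_condExp.trim hm stronglyMeasurable_condExp) fun A hA _ => ?_
  rw [← setIntegral_trim hm stronglyMeasurable_condExp hA,
    ← setIntegral_trim hm stronglyMeasurable_condExp hA, setIntegral_condExp hm hX hA,
    setIntegral_condExp hm hY hA]
  exact hle A hA

open scoped Classical in
theorem condExp_piecewise {A : Set Ω} (hm : m ≤ m0) (hA : MeasurableSet[m] A) {X Y : Ω → ℝ}
    (hX : Integrable X P) (hY : Integrable Y P) :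
    P[A.piecewise X Y | m] =ᵐ[P] A.piecewise (P[X | m]) (P[Y | m]) := by
  rw [← Set.indicator_add_compl_eq_piecewise, ← Set.indicator_add_compl_eq_piecewise]
  exact (condExp_add (hX.indicator (hm _ hA)) (hY.indicator (hm _ hA.compl)) m).trans
    ((condExp_indicator hX hA).add (condExp_indicator hY hA.compl))

theorem exists_tendsto_eLpNorm_one_of_cauchy {X : ℕ → Ω → ℝ} (hX : ∀ n, Integrable (X n) P)
    (hcauchy : ∀ ε > 0, ∃ N, ∀ n ≥ N, ∀ k ≥ N, ∫ ω, |X n ω - X k ω| ∂P < ε) :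
    ∃ g, Integrable g P ∧ Tendsto (fun n => eLpNorm (X n - g) 1 P) atTop (nhds 0) := by
  have hseq : CauchySeq fun n => (hX n).toL1 (X n) := by
    refine Metric.cauchySeq_iff.2 fun ε hε => ?_
    obtain ⟨N, hN⟩ := hcauchy ε hε
    refine ⟨N, fun n hn k hk => lt_of_eq_of_lt ?_ (hN n hn k hk)⟩
    rw [L1.dist_eq_integral_dist]
    refine integral_congr_ae ?_
    filter_upwards [(hX n).coeFn_toL1, (hX k).coeFn_toL1] with ω h1 h2
    rw [h1, h2, Real.dist_eq]
  obtain ⟨G, hG⟩ := cauchySeq_tendsto_of_complete hseq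
  refine ⟨G, L1.integrable_coeFn G, ?_⟩
  refine ((Lp.tendsto_Lp_iff_tendsto_eLpNorm' _ _).1 hG).congr fun n => eLpNorm_congr_ae ?_
  exact (hX n).coeFn_toL1.sub (ae_eq_refl _)

theorem exists_seq_tendsto_ae_of_forall_mem {ι : Type*} (S : Finset ι) {X : ℕ → ι → Ω → ℝ}
    {g : ι → Ω → ℝ} (h : ∀ i ∈ S, TendstoInMeasure P (fun n => X n i) atTop (g i)) :
    ∃ φ : ℕ → ℕ, StrictMono φ ∧
      ∀ᵐ ω ∂P, ∀ i ∈ S, Tendsto (fun n => X (φ n) i ω) atTop (nhds (g i ω)) := by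
  classical
  induction S using Finset.induction_on with
  | empty => exact ⟨id, strictMono_id, by simp⟩
  | insert a S _ ih =>
    obtain ⟨φ, hφ, hlim⟩ := ih fun i hi => h i (Finset.mem_insert_of_mem hi)
    obtain ⟨ψ, hψ, hlim'⟩ :=
      ((h a (Finset.mem_insert_self a S)).comp hφ.tendsto_atTop).exists_seq_tendsto_ae
    refine ⟨φ ∘ ψ, hφ.comp hψ, ?_⟩
    filter_upwards [hlim, hlim'] with ω hω hω' i hi
    rcases Finset.mem_insert.1 hi with rfl | hi
    · exact hω'
    · exact (hω i hi).comp hψ.tendsto_atTop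

theorem ae_pos_of_forall_mul_integral_max_le [IsFiniteMeasure P] {X : Ω → ℝ} {c : ℝ}
    (hX : Integrable X P)
    (h : ∀ x, 0 < x → ∃ l, 0 < l ∧ x * ∫ ω, max (l - X ω) 0 ∂P ≤ l * c) :
    ∀ᵐ ω ∂P, 0 < X ω := by
  have hbound : ∀ x, 0 < x → x * P.real {ω | X ω ≤ 0} ≤ c := by
    intro x hx
    obtain ⟨l, hl, hle⟩ := h x hx
    have hsub : {ω | X ω ≤ 0} ⊆ {ω | l ≤ max (l - X ω) 0} := fun ω (hω : X ω ≤ 0) =>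
      le_max_of_le_left ((le_sub_self_iff l).2 hω)
    have hmarkov : l * P.real {ω | X ω ≤ 0} ≤ ∫ ω, max (l - X ω) 0 ∂P :=
      (mul_le_mul_of_nonneg_left (measureReal_mono hsub) hl.le).trans
        (mul_meas_ge_le_integral_of_nonneg (.of_forall fun _ => le_max_right _ _)
          ((integrable_const l).sub hX).pos_part l)
    refine le_of_mul_le_mul_left ?_ hl
    linarith [mul_le_mul_of_nonneg_left hmarkov hx.le]
  have hzero : P.real {ω | X ω ≤ 0} = 0 := by
    by_contra hne
    have hpos : 0 < P.real {ω | X ω ≤ 0} := measureReal_nonneg.lt_of_ne' hne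
    have hle := hbound ((|c| + 1) / P.real {ω | X ω ≤ 0})
      (div_pos (by positivity) hpos)
    rw [div_mul_cancel₀ _ hne] at hle
    linarith [le_abs_self c]
  simpa [ae_iff] using (measureReal_eq_zero_iff).1 hzero

theorem exists_abs_le_of_memLp_top {Z : Ω → ℝ} (hZ : MemLp Z ⊤ P) :
    ∃ C, 0 ≤ C ∧ ∀ᵐ ω ∂P, |Z ω| ≤ C := by
  refine ⟨(eLpNorm Z ⊤ P).toReal, ENNReal.toReal_nonneg, ?_⟩
  filter_upwards [ae_le_eLpNormEssSup (f := Z) (μ := P)] with ω hω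
  rw [← eLpNorm_exponent_top] at hω
  simpa using ENNReal.toReal_mono hZ.2.ne hω

theorem MeasBdd.memLp_top {Z : Ω → ℝ} (hm : m ≤ m0) (hZ : MeasBdd m Z) : MemLp Z ⊤ P := by
  obtain ⟨hmeas, C, hC⟩ := hZ
  exact memLp_top_of_bound (hmeas.mono hm le_rfl).aestronglyMeasurable C (.of_forall hC)

end Integration

section Feasible

variable {m0 : MeasurableSpace Ω} {P : Measure Ω} {ℱ : Filtration ℕ m0} {t T : ℕ}
  {f : ℕ → ℝ → ℝ} {M L : ℕ → Ω → ℝ}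

namespace IsPosMart

theorem measurable (hM : IsPosMart P ℱ t T M) {s : ℕ} (hs : s ∈ Finset.Icc t T) :
    Measurable[ℱ s] (M s) :=
  (hM.1 s hs).1

theorem integrable (hM : IsPosMart P ℱ t T M) {s : ℕ} (hs : s ∈ Finset.Icc t T) :
    Integrable (M s) P :=
  (hM.1 s hs).2.1

theorem condExp_ae_eq (hM : IsPosMart P ℱ t T M) {r s : ℕ} (hr : r ∈ Finset.Icc t T)
    (hs : s ∈ Finset.Icc t T) (hrs : r ≤ s) : P[M s | ℱ r] =ᵐ[P] M r :=
  hM.2 r hr s hs hrs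

theorem ae_pos (hM : IsPosMart P ℱ t T M) : ∀ᵐ ω ∂P, ∀ s ∈ Finset.Icc t T, 0 < M s ω :=
  (Finset.eventually_all _).2 fun s hs => (hM.1 s hs).2.2

theorem of_martingale (hM : Martingale M ℱ P)
    (hpos : ∀ s ∈ Finset.Icc t T, ∀ᵐ ω ∂P, 0 < M s ω) : IsPosMart P ℱ t T M :=
  ⟨fun s hs => ⟨(hM.1 s).measurable, hM.integrable s, hpos s hs⟩,
    fun _ _ _ _ hrs => hM.condExp_ae_eq hrs⟩

theorem one [IsFiniteMeasure P] : IsPosMart P ℱ t T 1 :=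
  of_martingale (martingale_const ℱ P 1) fun _ _ => .of_forall fun _ => one_pos

theorem convexComb (hM : IsPosMart P ℱ t T M) (hL : IsPosMart P ℱ t T L) {a b : ℝ}
    (ha : 0 ≤ a) (hb : 0 ≤ b) (hab : a + b = 1) : IsPosMart P ℱ t T (a • M + b • L) := by
  refine ⟨fun s hs => ⟨?_, ?_, ?_⟩, fun r hr s hs hrs => ?_⟩
  · exact ((hM.measurable hs).const_smul a).add ((hL.measurable hs).const_smul b)
  · exact ((hM.integrable hs).smul a).add ((hL.integrable hs).smul b)
  · filter_upwards [hM.ae_pos, hL.ae_pos] with ω hMω hLω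
    exact convex_Ioi (0 : ℝ) (hMω s hs) (hLω s hs) ha hb hab
  · have hMr := (hM.condExp_ae_eq hr hs hrs).const_smul a
    have hLr := (hL.condExp_ae_eq hr hs hrs).const_smul b
    calc P[a • M s + b • L s | ℱ r]
        =ᵐ[P] P[a • M s | ℱ r] + P[b • L s | ℱ r] :=
          condExp_add ((hM.integrable hs).smul a) ((hL.integrable hs).smul b) _
      _ =ᵐ[P] a • P[M s | ℱ r] + b • P[L s | ℱ r] :=
          (condExp_smul a (M s) _).add (condExp_smul b (L s) _)
      _ =ᵐ[P] a • M r + b • L r := hMr.add hLr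

open scoped Classical in
theorem piecewise (hM : IsPosMart P ℱ t T M) (hL : IsPosMart P ℱ t T L) {A : Set Ω}
    (hA : MeasurableSet[ℱ t] A) : IsPosMart P ℱ t T fun s => A.piecewise (L s) (M s) := by
  have hA' : ∀ s ∈ Finset.Icc t T, MeasurableSet[ℱ s] A := fun s hs =>
    ℱ.mono (Finset.mem_Icc.1 hs).1 _ hA
  refine ⟨fun s hs => ⟨?_, ?_, ?_⟩, fun r hr s hs hrs => ?_⟩
  · exact (hL.measurable hs).piecewise (hA' s hs) (hM.measurable hs)
  · exact Integrable.piecewise (ℱ.le t _ hA) (hL.integrable hs).integrableOn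
      (hM.integrable hs).integrableOn
  · filter_upwards [hM.ae_pos, hL.ae_pos] with ω hMω hLω
    by_cases hω : ω ∈ A <;> simp [hω, hMω s hs, hLω s hs]
  · filter_upwards [condExp_piecewise (ℱ.le r) (hA' r hr) (hL.integrable hs) (hM.integrable hs),
      hM.condExp_ae_eq hr hs hrs, hL.condExp_ae_eq hr hs hrs] with ω hω hMω hLω
    rw [hω]
    by_cases hωA : ω ∈ A <;> simp [hωA, hMω, hLω]

end IsPosMart

/-- The positive martingales over which the dual problem is posed: those along which every
`f s (M s)` is integrable. In the application `f s` is the conjugate of the utility `u s`. -/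
structure DualFeasible {m0 : MeasurableSpace Ω} (P : Measure Ω) (ℱ : Filtration ℕ m0)
    (f : ℕ → ℝ → ℝ) (t T : ℕ) (M : ℕ → Ω → ℝ) : Prop where
  isPosMart : IsPosMart P ℱ t T M
  integrable_comp : ∀ s ∈ Finset.Icc t T, Integrable (fun ω => f s (M s ω)) P

namespace DualFeasible

theorem one [IsFiniteMeasure P] : DualFeasible P ℱ f t T 1 :=
  ⟨.one, fun s _ => integrable_const (f s 1)⟩

theorem convexComb (hM : DualFeasible P ℱ f t T M) (hL : DualFeasible P ℱ f t T L)
    (hf : ∀ s ∈ Finset.Icc t T, IsDualUtility (f s)) {a b : ℝ}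
    (ha : 0 ≤ a) (hb : 0 ≤ b) (hab : a + b = 1) : DualFeasible P ℱ f t T (a • M + b • L) := by
  have hmart := hM.isPosMart.convexComb hL.isPosMart ha hb hab
  refine ⟨hmart, fun s hs => ?_⟩
  have hmeas : AEStronglyMeasurable (fun ω => f s ((a • M + b • L) s ω)) P :=
    aestronglyMeasurable_comp_of_continuousOn (hf s hs).continuousOn measurableSet_Ioi
      (hmart.integrable hs).1.aemeasurable (hmart.ae_pos.mono fun ω hω => hω s hs)
  refine (((hM.integrable_comp s hs).const_mul a).add
    ((hL.integrable_comp s hs).const_mul b)).mono' hmeas ?_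
  filter_upwards [hmart.ae_pos, hM.isPosMart.ae_pos, hL.isPosMart.ae_pos] with ω hω hMω hLω
  rw [Real.norm_of_nonneg ((hf s hs).nonneg _ (hω s hs))]
  exact (hf s hs).strictConvexOn.convexOn.2 (hMω s hs) (hLω s hs) ha hb hab

open scoped Classical in
theorem piecewise (hM : DualFeasible P ℱ f t T M) (hL : DualFeasible P ℱ f t T L) {A : Set Ω}
    (hA : MeasurableSet[ℱ t] A) : DualFeasible P ℱ f t T fun s => A.piecewise (L s) (M s) := by
  refine ⟨hM.isPosMart.piecewise hL.isPosMart hA, fun s hs => ?_⟩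
  have hcomp : (fun ω => f s (A.piecewise (L s) (M s) ω)) =
      A.piecewise (fun ω => f s (L s ω)) (fun ω => f s (M s ω)) := by
    ext ω
    exact Set.apply_piecewise A _ _ fun _ => f s
  rw [hcomp]
  exact Integrable.piecewise (ℱ.le t _ hA) (hL.integrable_comp s hs).integrableOn
    (hM.integrable_comp s hs).integrableOn

end DualFeasible

end Feasible

section Cost

variable {m0 : MeasurableSpace Ω} {P : Measure Ω} {ℱ : Filtration ℕ m0} {t T : ℕ}
  {f : ℕ → ℝ → ℝ} {Z : Ω → ℝ} {M L : ℕ → Ω → ℝ}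

/-- The random variable `∑ₛ fₛ(Mₛ) + M_T Z`, whose conditional expectation given `ℱ t` is the
dual objective. -/
noncomputable def dualLoss (f : ℕ → ℝ → ℝ) (t T : ℕ) (Z : Ω → ℝ) (M : ℕ → Ω → ℝ) (ω : Ω) : ℝ :=
  ∑ s ∈ Finset.Icc t T, f s (M s ω) + M T ω * Z ω

/-- The unconditional expectation of the dual loss. -/
noncomputable def dualCost {_ : MeasurableSpace Ω} (P : Measure Ω) (f : ℕ → ℝ → ℝ) (t T : ℕ)
    (Z : Ω → ℝ) (M : ℕ → Ω → ℝ) : ℝ :=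
  ∫ ω, dualLoss f t T Z M ω ∂P

theorem DualFeasible.integrable_mul (hM : DualFeasible P ℱ f t T M) (ht : t ≤ T)
    (hZ : MemLp Z ⊤ P) : Integrable (fun ω => M T ω * Z ω) P :=
  (hM.isPosMart.integrable (Finset.right_mem_Icc.2 ht)).mul_of_top_left hZ

theorem DualFeasible.integrable_dualLoss (hM : DualFeasible P ℱ f t T M) (ht : t ≤ T)
    (hZ : MemLp Z ⊤ P) : Integrable (dualLoss f t T Z M) P :=
  (integrable_finsetSum _ hM.integrable_comp).add (hM.integrable_mul ht hZ)

theorem DualFeasible.dualObj_ae_eq_condExp {u : ℕ → ℝ → ℝ}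
    (hM : DualFeasible P ℱ (fun s => uStar (u s)) t T M) (ht : t ≤ T) (hZ : MemLp Z ⊤ P) :
    dualObj P ℱ u t T Z M =ᵐ[P] P[dualLoss (fun s => uStar (u s)) t T Z M | ℱ t] := by
  have hsum := condExp_finsetSum hM.integrable_comp (ℱ t)
  have hadd := condExp_add (integrable_finsetSum' _ hM.integrable_comp)
    (hM.integrable_mul ht hZ) (ℱ t)
  have hloss : dualLoss (fun s => uStar (u s)) t T Z M =
      (∑ s ∈ Finset.Icc t T, fun ω => uStar (u s) (M s ω)) + fun ω => M T ω * Z ω := by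
    ext ω
    simp [dualLoss]
  rw [hloss]
  filter_upwards [hsum, hadd] with ω hsumω haddω
  simp [dualObj, haddω, hsumω]

theorem dualUtility_le_sum (hf : ∀ s ∈ Finset.Icc t T, IsDualUtility (f s)) {ω : Ω}
    (hM : ∀ s ∈ Finset.Icc t T, 0 < M s ω) {s : ℕ} (hs : s ∈ Finset.Icc t T) :
    f s (M s ω) ≤ ∑ r ∈ Finset.Icc t T, f r (M r ω) :=
  Finset.single_le_sum (f := fun r => f r (M r ω))
    (fun r hr => (hf r hr).nonneg _ (hM r hr)) hs

theorem exists_dualLoss_lower_bounds (ht : t ≤ T) (hf : ∀ s ∈ Finset.Icc t T, IsDualUtility (f s))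
    (hZ : MemLp Z ⊤ P) :
    ∃ k, ∀ M : ℕ → Ω → ℝ, (∀ᵐ ω ∂P, ∀ s ∈ Finset.Icc t T, 0 < M s ω) → ∀ᵐ ω ∂P,
      ∑ s ∈ Finset.Icc t T, f s (M s ω) ≤ 2 * dualLoss f t T Z M ω + k ∧
      Z ω - M T ω * Z ω ≤ dualLoss f t T Z M ω + k := by
  have hTmem : T ∈ Finset.Icc t T := Finset.right_mem_Icc.2 ht
  obtain ⟨C, hC, hZC⟩ := exists_abs_le_of_memLp_top hZ
  obtain ⟨b, hb⟩ := (hf T hTmem).superlinear (2 * C)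
  refine ⟨C - b, fun M hM => ?_⟩
  filter_upwards [hM, hZC] with ω hpos hZω
  have hMZ : |M T ω * Z ω| ≤ C * M T ω := by
    rw [abs_mul, abs_of_pos (hpos T hTmem), mul_comm]
    exact mul_le_mul_of_nonneg_right hZω (hpos T hTmem).le
  have hterm := dualUtility_le_sum hf hpos hTmem
  have hsuper := hb _ (hpos T hTmem)
  have hMZ' := abs_le.1 hMZ
  have hZω' := abs_le.1 hZω
  unfold dualLoss
  constructor <;> linarith

theorem half_smul_add_half_smul_apply (M L : ℕ → Ω → ℝ) (s : ℕ) (ω : Ω) :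
    ((1 / 2 : ℝ) • M + (1 / 2 : ℝ) • L) s ω = (M s ω + L s ω) / 2 := by
  simp only [Pi.add_apply, Pi.smul_apply, smul_eq_mul]
  ring

theorem sum_midpointDefect_eq (f : ℕ → ℝ → ℝ) (t T : ℕ) (Z : Ω → ℝ) (M L : ℕ → Ω → ℝ) (ω : Ω) :
    ∑ s ∈ Finset.Icc t T, midpointDefect (f s) (M s ω) (L s ω) =
      (dualLoss f t T Z M ω + dualLoss f t T Z L ω) / 2 -
        dualLoss f t T Z ((1 / 2 : ℝ) • M + (1 / 2 : ℝ) • L) ω := by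
  simp only [midpointDefect, dualLoss, half_smul_add_half_smul_apply,
    Finset.sum_sub_distrib, ← Finset.sum_div, Finset.sum_add_distrib]
  ring

theorem midpointDefect_le_sum_midpointDefect
    (hf : ∀ s ∈ Finset.Icc t T, IsDualUtility (f s)) {ω : Ω}
    (hM : ∀ s ∈ Finset.Icc t T, 0 < M s ω) (hL : ∀ s ∈ Finset.Icc t T, 0 < L s ω)
    {s : ℕ} (hs : s ∈ Finset.Icc t T) :
    midpointDefect (f s) (M s ω) (L s ω) ≤
      ∑ r ∈ Finset.Icc t T, midpointDefect (f r) (M r ω) (L r ω) :=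
  Finset.single_le_sum (f := fun r => midpointDefect (f r) (M r ω) (L r ω))
    (fun r hr => (hf r hr).midpointDefect_nonneg (hM r hr) (hL r hr)) hs

namespace DualFeasible

theorem midpoint (hM : DualFeasible P ℱ f t T M) (hL : DualFeasible P ℱ f t T L)
    (hf : ∀ s ∈ Finset.Icc t T, IsDualUtility (f s)) :
    DualFeasible P ℱ f t T ((1 / 2 : ℝ) • M + (1 / 2 : ℝ) • L) :=
  hM.convexComb hL hf one_half_pos.le one_half_pos.le (add_halves 1)

theorem integrable_sum_midpointDefect (hM : DualFeasible P ℱ f t T M)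
    (hL : DualFeasible P ℱ f t T L) (hf : ∀ s ∈ Finset.Icc t T, IsDualUtility (f s)) :
    Integrable (fun ω => ∑ s ∈ Finset.Icc t T, midpointDefect (f s) (M s ω) (L s ω)) P := by
  refine integrable_finsetSum _ fun s hs => ?_
  have hmid := (hM.midpoint hL hf).integrable_comp s hs
  simp only [half_smul_add_half_smul_apply] at hmid
  exact (((hM.integrable_comp s hs).add (hL.integrable_comp s hs)).div_const 2).sub hmid

theorem integral_sum_midpointDefect (hM : DualFeasible P ℱ f t T M)
    (hL : DualFeasible P ℱ f t T L) (hf : ∀ s ∈ Finset.Icc t T, IsDualUtility (f s))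
    (ht : t ≤ T) (hZ : MemLp Z ⊤ P) :
    ∫ ω, ∑ s ∈ Finset.Icc t T, midpointDefect (f s) (M s ω) (L s ω) ∂P =
      (dualCost P f t T Z M + dualCost P f t T Z L) / 2 -
        dualCost P f t T Z ((1 / 2 : ℝ) • M + (1 / 2 : ℝ) • L) := by
  have hMint := hM.integrable_dualLoss ht hZ
  have hLint := hL.integrable_dualLoss ht hZ
  have hmidint := (hM.midpoint hL hf).integrable_dualLoss ht hZ
  simp only [sum_midpointDefect_eq f t T Z]
  rw [integral_sub (by fun_prop) hmidint, integral_div, integral_add hMint hLint]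
  rfl

end DualFeasible

theorem exists_dualLoss_convexComb_one_le (hf : ∀ s ∈ Finset.Icc t T, IsDualUtility (f s))
    {s : ℕ} (hs : s ∈ Finset.Icc t T) {x : ℝ} (hx : 0 < x) :
    ∃ l ∈ Set.Ioc (0 : ℝ) 1, ∀ (Z : Ω → ℝ) (M : ℕ → Ω → ℝ) (ω : Ω),
      (∀ r ∈ Finset.Icc t T, 0 < M r ω) →
      x * max (l - M s ω) 0 + dualLoss f t T Z ((1 - l) • M + l • 1) ω ≤
        dualLoss f t T Z M ω + l * (Z ω - M T ω * Z ω) := by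
  obtain ⟨l, hl, hls⟩ := (hf s hs).exists_mul_max_add_apply_convexComb_one_le hx
  refine ⟨l, hl, fun Z M ω hpos => ?_⟩
  have hsum : x * max (l - M s ω) 0 + ∑ r ∈ Finset.Icc t T, f r ((1 - l) * M r ω + l) ≤
      ∑ r ∈ Finset.Icc t T, f r (M r ω) := by
    have hrest : ∑ r ∈ (Finset.Icc t T).erase s, f r ((1 - l) * M r ω + l) ≤
        ∑ r ∈ (Finset.Icc t T).erase s, f r (M r ω) :=
      Finset.sum_le_sum fun r hr =>
        (hf r (Finset.mem_of_mem_erase hr)).apply_convexComb_one_le ⟨hl.1.le, hl.2⟩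
          (hpos r (Finset.mem_of_mem_erase hr))
    rw [← Finset.add_sum_erase _ _ hs, ← Finset.add_sum_erase _ _ hs]
    linarith [hls _ (hpos s hs)]
  simp only [dualLoss, Pi.add_apply, Pi.smul_apply, Pi.one_apply, smul_eq_mul, mul_one]
  linarith

end Cost

section Minimizer

variable {m0 : MeasurableSpace Ω} {P : Measure Ω} {ℱ : Filtration ℕ m0} {t T : ℕ}
  {f : ℕ → ℝ → ℝ} {Z : Ω → ℝ} {M L : ℕ → Ω → ℝ}

/-- A feasible martingale of least expected loss among all feasible ones. -/
structure IsDualMinimizer {m0 : MeasurableSpace Ω} (P : Measure Ω) (ℱ : Filtration ℕ m0)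
    (f : ℕ → ℝ → ℝ) (t T : ℕ) (Z : Ω → ℝ) (M : ℕ → Ω → ℝ) : Prop where
  dualFeasible : DualFeasible P ℱ f t T M
  dualCost_le : ∀ L, DualFeasible P ℱ f t T L → dualCost P f t T Z M ≤ dualCost P f t T Z L

/-- A sequence of feasible martingales whose expected losses converge to the value `I` of the
unconditional dual problem. -/
structure IsMinimizingSeq {m0 : MeasurableSpace Ω} (P : Measure Ω) (ℱ : Filtration ℕ m0)
    (f : ℕ → ℝ → ℝ) (t T : ℕ) (Z : Ω → ℝ) (X : ℕ → ℕ → Ω → ℝ) (I : ℝ) : Prop where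
  dualFeasible : ∀ n, DualFeasible P ℱ f t T (X n)
  le_dualCost : ∀ L, DualFeasible P ℱ f t T L → I ≤ dualCost P f t T Z L
  tendsto_dualCost : Tendsto (fun n => dualCost P f t T Z (X n)) atTop (nhds I)

open scoped Classical in
/-- Pasting a competitor into `M` on an `ℱ t`-measurable set keeps it feasible, so minimality of
the expected loss localizes to every such set. -/
theorem IsDualMinimizer.condExp_dualLoss_le [IsFiniteMeasure P]
    (hM : IsDualMinimizer P ℱ f t T Z M) (hL : DualFeasible P ℱ f t T L) (ht : t ≤ T)
    (hZ : MemLp Z ⊤ P) :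
    P[dualLoss f t T Z M | ℱ t] ≤ᵐ[P] P[dualLoss f t T Z L | ℱ t] := by
  have hMint := hM.dualFeasible.integrable_dualLoss ht hZ
  have hLint := hL.integrable_dualLoss ht hZ
  refine condExp_mono_of_forall_setIntegral_le (ℱ.le t) hMint hLint fun A hA => ?_
  have hpaste : dualLoss f t T Z (fun s => A.piecewise (L s) (M s)) =
      A.piecewise (dualLoss f t T Z L) (dualLoss f t T Z M) := by
    ext ω
    by_cases hω : ω ∈ A <;> simp [dualLoss, hω]
  have hmin := hM.dualCost_le _ (hM.dualFeasible.piecewise hL hA)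
  rw [dualCost, dualCost, hpaste, integral_piecewise (ℱ.le t _ hA) hLint.integrableOn
    hMint.integrableOn, ← integral_add_compl (ℱ.le t _ hA) hMint] at hmin
  linarith

theorem isDualMinimizer_iff_forall_dualObj_le [IsFiniteMeasure P] {u : ℕ → ℝ → ℝ}
    (hM : DualFeasible P ℱ (fun s => uStar (u s)) t T M) (ht : t ≤ T) (hZ : MemLp Z ⊤ P) :
    IsDualMinimizer P ℱ (fun s => uStar (u s)) t T Z M ↔
      ∀ L, DualFeasible P ℱ (fun s => uStar (u s)) t T L →
        dualObj P ℱ u t T Z M ≤ᵐ[P] dualObj P ℱ u t T Z L := by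
  refine ⟨fun hmin L hL => ?_, fun hobj => ⟨hM, fun L hL => ?_⟩⟩
  · filter_upwards [hM.dualObj_ae_eq_condExp ht hZ, hL.dualObj_ae_eq_condExp ht hZ,
      hmin.condExp_dualLoss_le hL ht hZ] with ω hMω hLω hle
    rwa [hMω, hLω]
  · have hle := (hM.dualObj_ae_eq_condExp ht hZ).symm.trans_le
      ((hobj L hL).trans_eq (hL.dualObj_ae_eq_condExp ht hZ))
    simpa only [dualCost, integral_condExp (ℱ.le t)] using
      integral_mono_ae integrable_condExp integrable_condExp hle

theorem IsDualMinimizer.ae_eq (hM : IsDualMinimizer P ℱ f t T Z M)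
    (hL : IsDualMinimizer P ℱ f t T Z L) (ht : t ≤ T)
    (hf : ∀ s ∈ Finset.Icc t T, IsDualUtility (f s)) (hZ : MemLp Z ⊤ P) {s : ℕ}
    (hs : s ∈ Finset.Icc t T) : M s =ᵐ[P] L s := by
  have hpos := hM.dualFeasible.isPosMart.ae_pos.and hL.dualFeasible.isPosMart.ae_pos
  have hnonneg : ∀ᵐ ω ∂P,
      0 ≤ ∑ s ∈ Finset.Icc t T, midpointDefect (f s) (M s ω) (L s ω) :=
    hpos.mono fun ω hω => Finset.sum_nonneg fun s hs =>
      (hf s hs).midpointDefect_nonneg (hω.1 s hs) (hω.2 s hs)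
  have hnonpos :
      ∫ ω, ∑ s ∈ Finset.Icc t T, midpointDefect (f s) (M s ω) (L s ω) ∂P ≤ 0 := by
    rw [hM.dualFeasible.integral_sum_midpointDefect hL.dualFeasible hf ht hZ]
    have hmid := hM.dualFeasible.midpoint hL.dualFeasible hf
    linarith [hM.dualCost_le _ hmid, hL.dualCost_le _ hmid]
  have hzero := (integral_eq_zero_iff_of_nonneg_ae hnonneg
    (hM.dualFeasible.integrable_sum_midpointDefect hL.dualFeasible hf)).1
    (hnonpos.antisymm (integral_nonneg_of_ae hnonneg))
  filter_upwards [hpos, hzero] with ω hω hsum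
  by_contra hne
  have hstrict := midpointDefect_pos (hf s hs).strictConvexOn (hω.1 s hs) (hω.2 s hs) hne
  exact (hstrict.trans_le (midpointDefect_le_sum_midpointDefect hf hω.1 hω.2 hs)).ne' hsum

theorem exists_integral_abs_sub_le [IsFiniteMeasure P] (ht : t ≤ T)
    (hf : ∀ s ∈ Finset.Icc t T, IsDualUtility (f s)) (hZ : MemLp Z ⊤ P) {s : ℕ}
    (hs : s ∈ Finset.Icc t T) :
    ∃ k, ∀ ε, 0 < ε → ∃ C, 0 ≤ C ∧ ∀ M L : ℕ → Ω → ℝ,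
      DualFeasible P ℱ f t T M → DualFeasible P ℱ f t T L →
      ∫ ω, |M s ω - L s ω| ∂P ≤
        ε * (k + 2 * dualCost P f t T Z M + 2 * dualCost P f t T Z L) +
          C * ((dualCost P f t T Z M + dualCost P f t T Z L) / 2 -
            dualCost P f t T Z ((1 / 2 : ℝ) • M + (1 / 2 : ℝ) • L)) := by
  obtain ⟨k, hk⟩ := exists_dualLoss_lower_bounds ht hf hZ
  refine ⟨(1 + 2 * k) * P.real Set.univ, fun ε hε => ?_⟩
  obtain ⟨C, hC, hdist⟩ := (hf s hs).abs_sub_le hε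
  refine ⟨C, hC, fun M L hM hL => ?_⟩
  have hMint := hM.integrable_dualLoss ht hZ
  have hLint := hL.integrable_dualLoss ht hZ
  have hdefect := hM.integrable_sum_midpointDefect hL hf
  have hpath : ∀ᵐ ω ∂P, |M s ω - L s ω| ≤
      ε * (1 + 2 * k + 2 * dualLoss f t T Z M ω + 2 * dualLoss f t T Z L ω) +
        C * ∑ r ∈ Finset.Icc t T, midpointDefect (f r) (M r ω) (L r ω) := by
    filter_upwards [hM.isPosMart.ae_pos, hL.isPosMart.ae_pos, hk M hM.isPosMart.ae_pos,
      hk L hL.isPosMart.ae_pos] with ω hMω hLω hkM hkL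
    have hfM := dualUtility_le_sum hf hMω hs
    have hfL := dualUtility_le_sum hf hLω hs
    calc |M s ω - L s ω|
        ≤ ε * (1 + f s (M s ω) + f s (L s ω)) + C * midpointDefect (f s) (M s ω) (L s ω) :=
          hdist _ _ (hMω s hs) (hLω s hs)
      _ ≤ _ := add_le_add (mul_le_mul_of_nonneg_left (by linarith) hε.le)
          (mul_le_mul_of_nonneg_left (midpointDefect_le_sum_midpointDefect hf hMω hLω hs) hC)
  refine (integral_mono_ae ((hM.isPosMart.integrable hs).sub (hL.isPosMart.integrable hs)).abs
    (by fun_prop) hpath).trans_eq ?_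
  rw [integral_add (by fun_prop) (by fun_prop), integral_const_mul, integral_const_mul,
    integral_add (by fun_prop) (by fun_prop), integral_add (by fun_prop) (by fun_prop),
    integral_const_mul, integral_const_mul, hM.integral_sum_midpointDefect hL hf ht hZ,
    integral_const, smul_eq_mul, mul_comm (P.real Set.univ)]
  rfl

theorem exists_mul_integral_max_add_dualCost_le [IsFiniteMeasure P] (ht : t ≤ T)
    (hf : ∀ s ∈ Finset.Icc t T, IsDualUtility (f s)) (hZ : MemLp Z ⊤ P) {s : ℕ}
    (hs : s ∈ Finset.Icc t T) :
    ∃ k, ∀ x, 0 < x → ∃ l ∈ Set.Ioc (0 : ℝ) 1, ∀ M, DualFeasible P ℱ f t T M →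
      x * ∫ ω, max (l - M s ω) 0 ∂P + dualCost P f t T Z ((1 - l) • M + l • 1) ≤
        dualCost P f t T Z M + l * (dualCost P f t T Z M + k) := by
  obtain ⟨k, hk⟩ := exists_dualLoss_lower_bounds ht hf hZ
  refine ⟨k * P.real Set.univ, fun x hx => ?_⟩
  obtain ⟨l, hl, hpert⟩ := exists_dualLoss_convexComb_one_le (Ω := Ω) hf hs hx
  refine ⟨l, hl, fun M hM => ?_⟩
  have hMint := hM.integrable_dualLoss ht hZ
  have hLint := (hM.convexComb .one hf (sub_nonneg.2 hl.2) hl.1.le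
    (sub_add_cancel 1 l)).integrable_dualLoss ht hZ
  have hmax : Integrable (fun ω => max (l - M s ω) 0) P :=
    ((integrable_const l).sub (hM.isPosMart.integrable hs)).pos_part
  have hpath : ∀ᵐ ω ∂P,
      x * max (l - M s ω) 0 + dualLoss f t T Z ((1 - l) • M + l • 1) ω ≤
        dualLoss f t T Z M ω + l * (dualLoss f t T Z M ω + k) := by
    filter_upwards [hM.isPosMart.ae_pos, hk M hM.isPosMart.ae_pos] with ω hω hkω
    exact (hpert Z M ω hω).trans (by gcongr; exacts [hl.1.le, hkω.2])
  have hle := integral_mono_ae (by fun_prop) (by fun_prop) hpath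
  rw [integral_add (by fun_prop) (by fun_prop), integral_add (by fun_prop) (by fun_prop),
    integral_const_mul, integral_const_mul, integral_add (by fun_prop) (by fun_prop),
    integral_const, smul_eq_mul, mul_comm (P.real Set.univ)] at hle
  exact hle

theorem exists_isMinimizingSeq [IsFiniteMeasure P] (ht : t ≤ T)
    (hf : ∀ s ∈ Finset.Icc t T, IsDualUtility (f s)) (hZ : MemLp Z ⊤ P) :
    ∃ X I, IsMinimizingSeq P ℱ f t T Z X I := by
  obtain ⟨k, hk⟩ := exists_dualLoss_lower_bounds ht hf hZ
  have hne : (dualCost P f t T Z '' {M | DualFeasible P ℱ f t T M}).Nonempty :=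
    ⟨_, 1, .one, rfl⟩
  have hbdd : BddBelow (dualCost P f t T Z '' {M | DualFeasible P ℱ f t T M}) := by
    refine ⟨∫ _, -k / 2 ∂P, ?_⟩
    rintro _ ⟨M, hM : DualFeasible P ℱ f t T M, rfl⟩
    refine integral_mono_ae (integrable_const _) (hM.integrable_dualLoss ht hZ) ?_
    filter_upwards [hM.isPosMart.ae_pos, hk M hM.isPosMart.ae_pos] with ω hω hkω
    have hnonneg := Finset.sum_nonneg fun s hs => (hf s hs).nonneg _ (hω s hs)
    linarith
  obtain ⟨J, -, hJlim, hJmem⟩ := exists_seq_tendsto_sInf hne hbdd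
  choose X hX hXJ using hJmem
  exact ⟨X, _, hX, fun L hL => csInf_le hbdd ⟨L, hL, rfl⟩, by simpa only [hXJ] using hJlim⟩

namespace IsMinimizingSeq

variable {X : ℕ → ℕ → Ω → ℝ} {I : ℝ}

theorem comp_strictMono (hX : IsMinimizingSeq P ℱ f t T Z X I) {φ : ℕ → ℕ} (hφ : StrictMono φ) :
    IsMinimizingSeq P ℱ f t T Z (X ∘ φ) I :=
  ⟨fun n => hX.dualFeasible (φ n), hX.le_dualCost, hX.tendsto_dualCost.comp hφ.tendsto_atTop⟩

theorem exists_forall_integral_abs_sub_lt [IsFiniteMeasure P]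
    (hX : IsMinimizingSeq P ℱ f t T Z X I) (ht : t ≤ T)
    (hf : ∀ s ∈ Finset.Icc t T, IsDualUtility (f s)) (hZ : MemLp Z ⊤ P) {s : ℕ}
    (hs : s ∈ Finset.Icc t T) {ε : ℝ} (hε : 0 < ε) :
    ∃ N, ∀ n ≥ N, ∀ k ≥ N, ∫ ω, |X n s ω - X k s ω| ∂P < ε := by
  obtain ⟨c, hc⟩ := exists_integral_abs_sub_le (ℱ := ℱ) ht hf hZ hs
  obtain ⟨C, hC, hle⟩ := hc (ε / (|c + 4 * I| + 1)) (by positivity)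
  have hsmall : ε / (|c + 4 * I| + 1) * (c + 2 * I + 2 * I) + C * ((I + I) / 2 - I) < ε := by
    rw [show C * ((I + I) / 2 - I) = 0 by ring, add_zero, div_mul_eq_mul_div,
      div_lt_iff₀ (by positivity)]
    exact mul_lt_mul_of_pos_left (by linarith [le_abs_self (c + 4 * I)]) hε
  have hfst := hX.tendsto_dualCost.comp (tendsto_fst (f := atTop) (g := (atTop : Filter ℕ)))
  have hsnd := hX.tendsto_dualCost.comp (tendsto_snd (f := (atTop : Filter ℕ)) (g := atTop))
  have hlim := ((((hfst.const_mul 2).const_add c).add (hsnd.const_mul 2)).const_mul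
    (ε / (|c + 4 * I| + 1))).add ((((hfst.add hsnd).div_const 2).sub_const I).const_mul C)
  have hev := hlim.eventually (gt_mem_nhds hsmall)
  rw [prod_atTop_atTop_eq, eventually_atTop_prod_self] at hev
  obtain ⟨N, hN⟩ := hev
  refine ⟨N, fun n hn k hk => lt_of_le_of_lt ?_ (hN n k hn hk)⟩
  refine (hle _ _ (hX.dualFeasible n) (hX.dualFeasible k)).trans ?_
  have hmid := hX.le_dualCost _ ((hX.dualFeasible n).midpoint (hX.dualFeasible k) hf)
  exact add_le_add le_rfl (mul_le_mul_of_nonneg_left (sub_le_sub_left hmid _) hC)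

theorem ae_pos_of_tendsto [IsFiniteMeasure P] (hX : IsMinimizingSeq P ℱ f t T Z X I) (ht : t ≤ T)
    (hf : ∀ s ∈ Finset.Icc t T, IsDualUtility (f s)) (hZ : MemLp Z ⊤ P) {s : ℕ}
    (hs : s ∈ Finset.Icc t T) {Y : Ω → ℝ} (hY : Integrable Y P)
    (hlim : ∀ᵐ ω ∂P, Tendsto (fun n => X n s ω) atTop (nhds (Y ω))) :
    ∀ᵐ ω ∂P, 0 < Y ω := by
  obtain ⟨k, hk⟩ := exists_mul_integral_max_add_dualCost_le (ℱ := ℱ) ht hf hZ hs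
  refine ae_pos_of_forall_mul_integral_max_le (c := I + k) hY fun x hx => ?_
  obtain ⟨l, hl, hpert⟩ := hk x hx
  refine ⟨l, hl.1, ?_⟩
  have hdom : Tendsto (fun n => ∫ ω, max (l - X n s ω) 0 ∂P) atTop
      (nhds (∫ ω, max (l - Y ω) 0 ∂P)) := by
    refine tendsto_integral_of_dominated_convergence (fun _ => l) (fun n => ?_)
      (integrable_const l) (fun n => ?_) ?_
    · exact ((integrable_const l).sub
        ((hX.dualFeasible n).isPosMart.integrable hs)).pos_part.aestronglyMeasurable
    · filter_upwards [(hX.dualFeasible n).isPosMart.ae_pos] with ω hω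
      rw [Real.norm_of_nonneg (le_max_right _ _)]
      exact max_le (sub_le_self l (hω s hs).le) hl.1.le
    · filter_upwards [hlim] with ω hω
      exact (hω.const_sub l).max tendsto_const_nhds
  have hrhs : Tendsto (fun n => dualCost P f t T Z (X n) - I +
      l * (dualCost P f t T Z (X n) + k)) atTop (nhds (I - I + l * (I + k))) :=
    (hX.tendsto_dualCost.sub_const I).add ((hX.tendsto_dualCost.add_const k).const_mul l)
  rw [sub_self, zero_add] at hrhs
  refine le_of_tendsto_of_tendsto' (hdom.const_mul x) hrhs fun n => ?_
  have hfeas := (hX.dualFeasible n).convexComb .one hf (sub_nonneg.2 hl.2) hl.1.le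
    (sub_add_cancel 1 l)
  linarith [hpert _ (hX.dualFeasible n), hX.le_dualCost _ hfeas]

theorem integrable_dualLoss_and_dualCost_le_of_tendsto [IsFiniteMeasure P]
    (hX : IsMinimizingSeq P ℱ f t T Z X I) (ht : t ≤ T)
    (hf : ∀ s ∈ Finset.Icc t T, IsDualUtility (f s)) (hZ : MemLp Z ⊤ P)
    (hpos : ∀ᵐ ω ∂P, ∀ s ∈ Finset.Icc t T, 0 < M s ω)
    (hlim : ∀ᵐ ω ∂P, ∀ s ∈ Finset.Icc t T, Tendsto (fun n => X n s ω) atTop (nhds (M s ω))) :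
    Integrable (dualLoss f t T Z M) P ∧ dualCost P f t T Z M ≤ I := by
  obtain ⟨k, hk⟩ := exists_dualLoss_lower_bounds ht hf hZ
  have hint := fun n => (hX.dualFeasible n).integrable_dualLoss ht hZ
  have hloss : ∀ᵐ ω ∂P, Tendsto (fun n => dualLoss f t T Z (X n) ω + k / 2) atTop
      (nhds (dualLoss f t T Z M ω + k / 2)) := by
    filter_upwards [hpos, hlim] with ω hω hlimω
    refine ((tendsto_finsetSum _ fun s hs => ?_).add
      ((hlimω T (Finset.right_mem_Icc.2 ht)).mul_const _)).add_const _
    exact ((hf s hs).continuousOn.continuousAt (Ioi_mem_nhds (hω s hs))).tendsto.comp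
      (hlimω s hs)
  have hnonneg : ∀ n, 0 ≤ᵐ[P] fun ω => dualLoss f t T Z (X n) ω + k / 2 := fun n => by
    have hXpos := (hX.dualFeasible n).isPosMart.ae_pos
    filter_upwards [hXpos, hk _ hXpos] with ω hω hkω
    have hsum := Finset.sum_nonneg fun s hs => (hf s hs).nonneg _ (hω s hs)
    change 0 ≤ _
    linarith
  have hcost : Tendsto (fun n => ∫ ω, (dualLoss f t T Z (X n) ω + k / 2) ∂P) atTop
      (nhds (I + ∫ _, k / 2 ∂P)) := by
    simp only [integral_add (hint _) (integrable_const (k / 2))]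
    exact hX.tendsto_dualCost.add_const _
  obtain ⟨hMint, hle⟩ := integrable_and_integral_le_of_tendsto
    (fun n => (hint n).add (integrable_const (k / 2))) hnonneg hloss hcost
  have hMint' : Integrable (dualLoss f t T Z M) P :=
    (integrable_add_iff_integrable_left' (integrable_const (k / 2))).1 hMint
  rw [integral_add hMint' (integrable_const _)] at hle
  exact ⟨hMint', le_of_add_le_add_right hle⟩

theorem isDualMinimizer_of_tendsto [IsFiniteMeasure P] (hX : IsMinimizingSeq P ℱ f t T Z X I)
    (ht : t ≤ T) (hf : ∀ s ∈ Finset.Icc t T, IsDualUtility (f s)) (hZ : MemLp Z ⊤ P)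
    (hM : Martingale M ℱ P)
    (hlim : ∀ᵐ ω ∂P, ∀ s ∈ Finset.Icc t T, Tendsto (fun n => X n s ω) atTop (nhds (M s ω))) :
    IsDualMinimizer P ℱ f t T Z M := by
  have hmart : IsPosMart P ℱ t T M := .of_martingale hM fun s hs =>
    hX.ae_pos_of_tendsto ht hf hZ hs (hM.integrable s) (hlim.mono fun _ hω => hω s hs)
  obtain ⟨hint, hle⟩ :=
    hX.integrable_dualLoss_and_dualCost_le_of_tendsto ht hf hZ hmart.ae_pos hlim
  obtain ⟨k, hk⟩ := exists_dualLoss_lower_bounds ht hf hZ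
  refine ⟨⟨hmart, fun s hs => ?_⟩, fun L hL => hle.trans (hX.le_dualCost L hL)⟩
  have hmeas : AEStronglyMeasurable (fun ω => f s (M s ω)) P :=
    aestronglyMeasurable_comp_of_continuousOn (hf s hs).continuousOn measurableSet_Ioi
      (hM.integrable s).1.aemeasurable (hmart.ae_pos.mono fun ω hω => hω s hs)
  refine ((hint.const_mul 2).add (integrable_const k)).mono' hmeas ?_
  filter_upwards [hmart.ae_pos, hk M hmart.ae_pos] with ω hω hkω
  rw [Real.norm_of_nonneg ((hf s hs).nonneg _ (hω s hs))]
  exact (dualUtility_le_sum hf hω hs).trans hkω.1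

end IsMinimizingSeq

theorem exists_martingale_tendsto_of_cauchy [IsFiniteMeasure P] {X : ℕ → ℕ → Ω → ℝ} (ht : t ≤ T)
    (hX : ∀ n, IsPosMart P ℱ t T (X n))
    (hcauchy : ∀ ε > 0, ∃ N, ∀ n ≥ N, ∀ k ≥ N, ∫ ω, |X n T ω - X k T ω| ∂P < ε) :
    ∃ M, Martingale M ℱ P ∧ ∀ s ∈ Finset.Icc t T,
      Tendsto (fun n => eLpNorm (X n s - M s) 1 P) atTop (nhds 0) := by
  have hTmem : T ∈ Finset.Icc t T := Finset.right_mem_Icc.2 ht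
  obtain ⟨g, hg, hlim⟩ :=
    exists_tendsto_eLpNorm_one_of_cauchy (fun n => (hX n).integrable hTmem) hcauchy
  refine ⟨fun s => P[g | ℱ s], martingale_condExp g ℱ P, fun s hs => ?_⟩
  refine tendsto_of_tendsto_of_tendsto_of_le_of_le tendsto_const_nhds hlim
    (fun _ => zero_le) fun n => ?_
  have hcond : X n s - P[g | ℱ s] =ᵐ[P] P[X n T - g | ℱ s] :=
    (((hX n).condExp_ae_eq hs hTmem (Finset.mem_Icc.1 hs).2).symm.sub (ae_eq_refl _)).trans
      (condExp_sub ((hX n).integrable hTmem) hg _).symm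
  exact (eLpNorm_congr_ae hcond).trans_le (eLpNorm_condExp_le_eLpNorm _ le_rfl)

theorem exists_isDualMinimizer [IsFiniteMeasure P] (ht : t ≤ T)
    (hf : ∀ s ∈ Finset.Icc t T, IsDualUtility (f s)) (hZ : MemLp Z ⊤ P) :
    ∃ M, IsDualMinimizer P ℱ f t T Z M := by
  obtain ⟨X, I, hX⟩ := exists_isMinimizingSeq (ℱ := ℱ) ht hf hZ
  obtain ⟨M, hM, hL1⟩ := exists_martingale_tendsto_of_cauchy ht
    (fun n => (hX.dualFeasible n).isPosMart)
    fun ε hε => hX.exists_forall_integral_abs_sub_lt ht hf hZ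
      (Finset.right_mem_Icc.2 ht) hε
  have hmeasure : ∀ s ∈ Finset.Icc t T, TendstoInMeasure P (fun n => X n s) atTop (M s) :=
    fun s hs => tendstoInMeasure_of_tendsto_eLpNorm one_ne_zero
      (fun n => ((hX.dualFeasible n).isPosMart.integrable hs).1) (hM.integrable s).1 (hL1 s hs)
  obtain ⟨φ, hφ, hlim⟩ := exists_seq_tendsto_ae_of_forall_mem _ hmeasure
  exact ⟨M, (hX.comp_strictMono hφ).isDualMinimizer_of_tendsto ht hf hZ hM hlim⟩

end Minimizer

theorem dual_problem_existence_uniqueness_general {m0 : MeasurableSpace Ω} (P : Measure Ω)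
    [IsFiniteMeasure P] (ℱ : Filtration ℕ m0) {T t : ℕ} (ht : t ≤ T) (u : ℕ → ℝ → ℝ)
    (hu : ∀ s ∈ Finset.Icc t T, IsDualUtility (uStar (u s))) {Z : Ω → ℝ} (hZ : MemLp Z ⊤ P) :
    ∃ M, DualFeasible P ℱ (fun s => uStar (u s)) t T M ∧
      (∀ L, DualFeasible P ℱ (fun s => uStar (u s)) t T L →
        dualObj P ℱ u t T Z M ≤ᵐ[P] dualObj P ℱ u t T Z L) ∧
      ∀ M', DualFeasible P ℱ (fun s => uStar (u s)) t T M' →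
        (∀ L, DualFeasible P ℱ (fun s => uStar (u s)) t T L →
          dualObj P ℱ u t T Z M' ≤ᵐ[P] dualObj P ℱ u t T Z L) →
        ∀ s ∈ Finset.Icc t T, M' s =ᵐ[P] M s := by
  obtain ⟨M, hM⟩ := exists_isDualMinimizer (ℱ := ℱ) ht hu hZ
  refine ⟨M, hM.dualFeasible, (isDualMinimizer_iff_forall_dualObj_le hM.dualFeasible ht hZ).1 hM,
    fun M' hM' hopt s hs => ?_⟩
  exact ((isDualMinimizer_iff_forall_dualObj_le hM' ht hZ).2 hopt).ae_eq hM ht hu hZ hs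

/-- Theorem 2.19: there exists a positive martingale attaining the
essential infimum of the dual problem, and it is unique up to a.s. equality. -/
theorem dual_problem_existence_uniqueness
    {m0 : MeasurableSpace Ω} (P : Measure Ω) [IsProbabilityMeasure P]
    (ℱ : Filtration ℕ m0) (T t : ℕ) (hT : 0 < T) (ht : t ≤ T)
    (u u' : ℕ → ℝ → ℝ) (hu : ∀ s, IsUtility (u s) (u' s))
    (Z : Ω → ℝ) (hZ : MeasBdd (ℱ T) Z) :
    ∃ M : ℕ → Ω → ℝ,
      (IsPosMart P ℱ t T M ∧
        ∀ s ∈ Finset.Icc t T, Integrable (fun ω => uStar (u s) (M s ω)) P) ∧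
      -- `M` attains the essential infimum of the dual problem:
      (∀ L : ℕ → Ω → ℝ,
        IsPosMart P ℱ t T L →
        (∀ s ∈ Finset.Icc t T, Integrable (fun ω => uStar (u s) (L s ω)) P) →
        dualObj P ℱ u t T Z M ≤ᵐ[P] dualObj P ℱ u t T Z L) ∧
      -- uniqueness up to a.s. equality:
      (∀ M' : ℕ → Ω → ℝ,
        IsPosMart P ℱ t T M' →
        (∀ s ∈ Finset.Icc t T, Integrable (fun ω => uStar (u s) (M' s ω)) P) →
        (∀ L : ℕ → Ω → ℝ,
          IsPosMart P ℱ t T L →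
          (∀ s ∈ Finset.Icc t T, Integrable (fun ω => uStar (u s) (L s ω)) P) →
          dualObj P ℱ u t T Z M' ≤ᵐ[P] dualObj P ℱ u t T Z L) →
        ∀ s ∈ Finset.Icc t T, M' s =ᵐ[P] M s) := by
  obtain ⟨M, hM, hopt, huniq⟩ := dual_problem_existence_uniqueness_general P ℱ ht u
    (fun s _ => (hu s).isDualUtility_uStar) (hZ.memLp_top (ℱ.le T))
  exact ⟨M, ⟨hM.1, hM.2⟩, fun L hL hLint => hopt L ⟨hL, hLint⟩, fun M' hM' hMint' hopt' =>
    huniq M' ⟨hM', hMint'⟩ fun L hL => hopt' L hL.1 hL.2⟩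
end

section
/- In the exponential case, for every Z ∈ L^∞_T the process (X̂_s(Z))_{s=t,…,T} defined by X̂_t(Z) = (β_t/α_t) V_t(Z) and X̂_s(Z) = (1/α_s){ β_t V_t(Z) + Σ_{r=t+1}^s β_r (V_r(Z) − V_{r−1}(Z)) } for s = t+1,…,T, is the unique (up to a.s. equality) maximizer of the essential supremum esssup_{(X_s)∈𝓐_{1,t}(Z)} Σ_{s=t}^T E[u_s(X_s) | 𝓕_t]. Moreover U_t(Z) = (1/β_t)(1 − exp(−β_t V_t(Z))) a.s. -/
open MeasureTheory Filter

variable {Ω : Type*}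

/-!
A diversification `X` of `Z` is optimal as soon as some integrable `ξ` satisfies the first-order
condition `E[ξ | 𝓕_s] = u_s'(X_s)` for all `s`: the gap between `∑ u_s(Y_s)` and its tangent at `X`
is nonnegative by concavity, and the linear term `∑ u_s'(X_s) (Y_s - X_s)` has the same conditional
expectation as `ξ ∑ (Y_s - X_s) = 0`. Under strict concavity a vanishing gap forces `Y = X`.

For exponential utilities `u_s'(X̂_s) = exp (-L_s)`, where `L_s = α_s X̂_s` has initial value
`β_t V_t` and increments `β_r (V_r - V_{r-1})`. The backward iteration for `V` says exactly that
`exp (-L)` is a martingale, so `ξ = exp (-L_T)` is such a multiplier.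
-/

namespace MeasBdd

variable {m m' : MeasurableSpace Ω} {X Y : Ω → ℝ}

theorem mono (hm : m ≤ m') (hX : MeasBdd m X) : MeasBdd m' X :=
  ⟨hX.1.mono hm le_rfl, hX.2⟩

theorem add (hX : MeasBdd m X) (hY : MeasBdd m Y) : MeasBdd m fun ω => X ω + Y ω := by
  obtain ⟨hX, C, hC⟩ := hX
  obtain ⟨hY, D, hD⟩ := hY
  exact ⟨hX.add hY, C + D, fun ω => (abs_add_le _ _).trans (add_le_add (hC ω) (hD ω))⟩

theorem sub (hX : MeasBdd m X) (hY : MeasBdd m Y) : MeasBdd m fun ω => X ω - Y ω := by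
  obtain ⟨hX, C, hC⟩ := hX
  obtain ⟨hY, D, hD⟩ := hY
  exact ⟨hX.sub hY, C + D, fun ω => (abs_sub _ _).trans (add_le_add (hC ω) (hD ω))⟩

theorem continuous_comp {f : ℝ → ℝ} (hf : Continuous f) (hX : MeasBdd m X) :
    MeasBdd m fun ω => f (X ω) := by
  obtain ⟨hX, C, hC⟩ := hX
  obtain ⟨D, hD⟩ := isCompact_Icc.exists_bound_of_continuousOn (s := Set.Icc (-C) C) hf.continuousOn
  exact ⟨hf.measurable.comp hX, D, fun ω => hD _ (abs_le.1 (hC ω))⟩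

theorem const_mul (c : ℝ) (hX : MeasBdd m X) : MeasBdd m fun ω => c * X ω :=
  hX.continuous_comp (continuous_const_mul c)

theorem integrable_mul (hm : m ≤ m') {μ : Measure[m'] Ω} (hX : MeasBdd m X) {f : Ω → ℝ}
    (hf : Integrable f μ) : Integrable (fun ω => f ω * X ω) μ := by
  obtain ⟨hX, C, hC⟩ := hX
  exact hf.mul_bdd (hX.mono hm le_rfl).aestronglyMeasurable (.of_forall hC)

theorem integrable (hm : m ≤ m') {μ : Measure[m'] Ω} [IsFiniteMeasure μ] (hX : MeasBdd m X) :
    Integrable X μ := by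
  simpa only [one_mul] using hX.integrable_mul hm (integrable_const (1 : ℝ))

end MeasBdd

section ConditionalExpectation

variable {m m' m0 : MeasurableSpace Ω} {μ : Measure Ω}

theorem condExp_pos_of_ae_pos (hm : m ≤ m0) [SigmaFinite (μ.trim hm)] {f : Ω → ℝ}
    (hf : Integrable f μ) (hpos : ∀ᵐ ω ∂μ, 0 < f ω) : ∀ᵐ ω ∂μ, 0 < μ[f | m] ω := by
  set A : Set Ω := {ω | μ[f | m] ω ≤ 0}
  have hA : MeasurableSet[m] A :=
    (stronglyMeasurable_condExp (f := f) (μ := μ)).measurable measurableSet_Iic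
  have integral_nonpos : ∫ ω in A, f ω ∂μ ≤ 0 := by
    rw [← setIntegral_condExp hm hf hA]
    exact setIntegral_nonpos (hm A hA) fun _ h => h
  have f_nonneg : 0 ≤ᵐ[μ.restrict A] f := ae_restrict_of_ae (hpos.mono fun _ => le_of_lt)
  have f_zero : f =ᵐ[μ.restrict A] 0 :=
    (integral_eq_zero_iff_of_nonneg_ae f_nonneg hf.integrableOn).1
      (integral_nonpos.antisymm (integral_nonneg_of_ae f_nonneg))
  filter_upwards [hpos, (ae_restrict_iff' (hm A hA)).1 f_zero] with ω hω hzero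
  exact not_le.1 fun hmem => hω.ne' (hzero hmem)

theorem condExp_condExp_mul_measBdd (hm : m ≤ m') (hm' : m' ≤ m0) [SigmaFinite (μ.trim hm')]
    {ξ D : Ω → ℝ} (hξ : Integrable ξ μ) (hD : MeasBdd m' D) :
    μ[fun ω => μ[ξ | m'] ω * D ω | m] =ᵐ[μ] μ[fun ω => ξ ω * D ω | m] :=
  have pull_out : μ[fun ω => ξ ω * D ω | m'] =ᵐ[μ] fun ω => μ[ξ | m'] ω * D ω :=
    condExp_mul_of_stronglyMeasurable_right hD.1.stronglyMeasurable (hD.integrable_mul hm' hξ) hξ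
  (condExp_congr_ae pull_out).symm.trans (condExp_condExp_of_le hm hm')

theorem condExp_terminal_ae_eq_of_condExp_succ {E : Type*} [NormedAddCommGroup E]
    [NormedSpace ℝ E] [CompleteSpace E] [IsFiniteMeasure μ] {ℱ : Filtration ℕ m0} {t T : ℕ}
    {M : ℕ → Ω → E} (hmeas : StronglyMeasurable[ℱ T] (M T)) (hint : Integrable (M T) μ)
    (hstep : ∀ s ∈ Finset.Ico t T, μ[M (s + 1) | ℱ s] =ᵐ[μ] M s) {s : ℕ}
    (hs : s ∈ Finset.Icc t T) : μ[M T | ℱ s] =ᵐ[μ] M s := by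
  obtain ⟨hts, hsT⟩ := Finset.mem_Icc.1 hs
  clear hs
  induction hsT using Nat.decreasingInduction with
  | self => rw [condExp_of_stronglyMeasurable (ℱ.le T) hmeas hint]
  | of_succ s hsT ih =>
    calc μ[M T | ℱ s]
      _ =ᵐ[μ] μ[μ[M T | ℱ (s + 1)] | ℱ s] :=
        (condExp_condExp_of_le (ℱ.mono s.le_succ) (ℱ.le _)).symm
      _ =ᵐ[μ] μ[M (s + 1) | ℱ s] := condExp_congr_ae (ih (hts.trans s.le_succ))
      _ =ᵐ[μ] M s := hstep s (Finset.mem_Ico.2 ⟨hts, hsT⟩)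

theorem condExp_exp_ae_eq_of_certaintyEquivalent (hm : m ≤ m0) [SigmaFinite (μ.trim hm)] {b : ℝ}
    (hb : b ≠ 0) {V X : Ω → ℝ} (hX : Integrable (fun ω => Real.exp (-b * X ω)) μ)
    (hV : V =ᵐ[μ] fun ω => -b⁻¹ * Real.log (μ[fun ω' => Real.exp (-b * X ω') | m] ω)) :
    μ[fun ω => Real.exp (-b * X ω) | m] =ᵐ[μ] fun ω => Real.exp (-b * V ω) := by
  have hpos := condExp_pos_of_ae_pos hm hX (.of_forall fun ω => Real.exp_pos _)
  filter_upwards [hV, hpos] with ω hVω hposω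
  rw [hVω, neg_mul, neg_mul, mul_neg, neg_neg, mul_inv_cancel_left₀ hb, Real.exp_log hposω]

theorem condExp_exp_neg_add_mul_sub_ae_eq [IsFiniteMeasure μ] (hm : m ≤ m0) {b : ℝ} (hb : b ≠ 0)
    {L V X : Ω → ℝ} (hL : MeasBdd m L) (hVm : MeasBdd m V) (hX : MeasBdd m0 X)
    (hV : V =ᵐ[μ] fun ω => -b⁻¹ * Real.log (μ[fun ω' => Real.exp (-b * X ω') | m] ω)) :
    μ[fun ω => Real.exp (-(L ω + b * (X ω - V ω))) | m] =ᵐ[μ] fun ω => Real.exp (-L ω) := by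
  have hexpX : Integrable (fun ω => Real.exp (-b * X ω)) μ :=
    ((hX.const_mul (-b)).continuous_comp Real.continuous_exp).integrable le_rfl
  have hfactor : MeasBdd m fun ω => Real.exp (b * V ω - L ω) :=
    ((hVm.const_mul b).sub hL).continuous_comp Real.continuous_exp
  have split : (fun ω => Real.exp (-(L ω + b * (X ω - V ω)))) =
      (fun ω => Real.exp (-b * X ω)) * fun ω => Real.exp (b * V ω - L ω) := by
    funext ω
    rw [Pi.mul_apply, ← Real.exp_add]
    ring_nf
  rw [split]
  filter_upwards [condExp_mul_of_stronglyMeasurable_right hfactor.1.stronglyMeasurable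
      (hfactor.integrable_mul hm hexpX) hexpX,
    condExp_exp_ae_eq_of_certaintyEquivalent hm hb hexpX hV] with ω hpull hcond
  rw [hpull, Pi.mul_apply, hcond, ← Real.exp_add]
  ring_nf

end ConditionalExpectation

section TangentGap

/-- The height at `y` of the tangent to `f` at `x` above the graph of `f`, where `f'` is the
derivative of `f`. -/
def tangentGap (f f' : ℝ → ℝ) (x y : ℝ) : ℝ :=
  f x + f' x * (y - x) - f y

variable {f f' : ℝ → ℝ} {x y : ℝ}

theorem tangentGap_nonneg (hf : ConcaveOn ℝ Set.univ f) (hf' : HasDerivAt f (f' x) x) :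
    0 ≤ tangentGap f f' x y := by
  unfold tangentGap
  rcases lt_trichotomy x y with hxy | rfl | hyx
  · have := hf.slope_le_of_hasDerivAt trivial trivial hxy hf'
    rw [slope_def_field, div_le_iff₀ (sub_pos.2 hxy)] at this
    linarith
  · simp
  · have := hf.le_slope_of_hasDerivAt trivial trivial hyx hf'
    rw [slope_def_field, le_div_iff₀ (sub_pos.2 hyx)] at this
    linarith

theorem tangentGap_pos (hf : StrictConcaveOn ℝ Set.univ f) (hf' : HasDerivAt f (f' x) x)
    (hne : y ≠ x) : 0 < tangentGap f f' x y := by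
  unfold tangentGap
  rcases hne.lt_or_gt with hyx | hxy
  · have := hf.lt_slope_of_hasDerivAt trivial trivial hyx hf'
    rw [slope_def_field, lt_div_iff₀ (sub_pos.2 hyx)] at this
    linarith
  · have := hf.slope_lt_of_hasDerivAt trivial trivial hxy hf'
    rw [slope_def_field, div_lt_iff₀ (sub_pos.2 hxy)] at this
    linarith

end TangentGap

/-- The first-order condition for `X` in the diversification problem: `ξ` is a Lagrange multiplier
for the constraint `∑_{s=t}^T X_s = Z`, and each marginal utility `u_s'(X_s)` is its projection
onto `𝓕_s`. The argument `u'` is the family of derivatives of the utilities. -/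
structure IsLagrangeMultiplier {m0 : MeasurableSpace Ω} (P : Measure Ω) (ℱ : Filtration ℕ m0)
    (u' : ℕ → ℝ → ℝ) (t T : ℕ) (X : ℕ → Ω → ℝ) (ξ : Ω → ℝ) : Prop where
  integrable : Integrable ξ P
  condExp_ae_eq : ∀ s ∈ Finset.Icc t T, P[ξ | ℱ s] =ᵐ[P] fun ω => u' s (X s ω)

namespace IsLagrangeMultiplier

variable {m0 : MeasurableSpace Ω} {P : Measure Ω} {ℱ : Filtration ℕ m0}
  {u u' : ℕ → ℝ → ℝ} {t T : ℕ} {Z ξ : Ω → ℝ} {X Y : ℕ → Ω → ℝ}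

theorem integrable_marginal (hξ : IsLagrangeMultiplier P ℱ u' t T X ξ) {s : ℕ}
    (hs : s ∈ Finset.Icc t T) : Integrable (fun ω => u' s (X s ω)) P :=
  integrable_condExp.congr (hξ.condExp_ae_eq s hs)

variable [IsFiniteMeasure P]

theorem sum_condExp_marginal_mul_sub_ae_eq_zero (hξ : IsLagrangeMultiplier P ℱ u' t T X ξ)
    (hX : IsDiv1 P ℱ t T Z X) (hY : IsDiv1 P ℱ t T Z Y) :
    ∑ s ∈ Finset.Icc t T, P[fun ω => u' s (X s ω) * (Y s ω - X s ω) | ℱ t] =ᵐ[P] 0 := by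
  have hD : ∀ s ∈ Finset.Icc t T, MeasBdd (ℱ s) fun ω => Y s ω - X s ω :=
    fun s hs => (hY.1 s hs).sub (hX.1 s hs)
  have replace_marginal : ∀ s ∈ Finset.Icc t T,
      P[fun ω => u' s (X s ω) * (Y s ω - X s ω) | ℱ t] =ᵐ[P]
        P[fun ω => ξ ω * (Y s ω - X s ω) | ℱ t] := fun s hs =>
    (condExp_congr_ae ((hξ.condExp_ae_eq s hs).symm.mul .rfl)).trans
      (condExp_condExp_mul_measBdd (ℱ.mono (Finset.mem_Icc.1 hs).1) (ℱ.le s) hξ.integrable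
        (hD s hs))
  have sum_zero : ∑ s ∈ Finset.Icc t T, (fun ω => ξ ω * (Y s ω - X s ω)) =ᵐ[P] 0 := by
    filter_upwards [hX.2, hY.2] with ω hXω hYω
    rw [Finset.sum_apply, ← Finset.mul_sum, Finset.sum_sub_distrib, hXω, hYω, sub_self, mul_zero,
      Pi.zero_apply]
  calc ∑ s ∈ Finset.Icc t T, P[fun ω => u' s (X s ω) * (Y s ω - X s ω) | ℱ t]
    _ =ᵐ[P] ∑ s ∈ Finset.Icc t T, P[fun ω => ξ ω * (Y s ω - X s ω) | ℱ t] :=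
      eventuallyEq_sum replace_marginal
    _ =ᵐ[P] P[∑ s ∈ Finset.Icc t T, (fun ω => ξ ω * (Y s ω - X s ω)) | ℱ t] :=
      (condExp_finsetSum (fun s hs => (hD s hs).integrable_mul (ℱ.le s) hξ.integrable) _).symm
    _ =ᵐ[P] P[0 | ℱ t] := condExp_congr_ae sum_zero
    _ =ᵐ[P] 0 := by rw [condExp_zero]

theorem integrable_tangentGap (hξ : IsLagrangeMultiplier P ℱ u' t T X ξ)
    (hu : ∀ s ∈ Finset.Icc t T, Continuous (u s))
    (hX : IsDiv1 P ℱ t T Z X) (hY : IsDiv1 P ℱ t T Z Y) {s : ℕ} (hs : s ∈ Finset.Icc t T) :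
    Integrable (fun ω => tangentGap (u s) (u' s) (X s ω) (Y s ω)) P :=
  ((((hX.1 s hs).continuous_comp (hu s hs)).integrable (ℱ.le s)).add
    (((hY.1 s hs).sub (hX.1 s hs)).integrable_mul (ℱ.le s) (hξ.integrable_marginal hs))).sub
      (((hY.1 s hs).continuous_comp (hu s hs)).integrable (ℱ.le s))

theorem utilSum1_sub_ae_eq_condExp_sum_tangentGap (hξ : IsLagrangeMultiplier P ℱ u' t T X ξ)
    (hu : ∀ s ∈ Finset.Icc t T, Continuous (u s))
    (hX : IsDiv1 P ℱ t T Z X) (hY : IsDiv1 P ℱ t T Z Y) :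
    utilSum1 P ℱ u t T X - utilSum1 P ℱ u t T Y =ᵐ[P]
      P[∑ s ∈ Finset.Icc t T, fun ω => tangentGap (u s) (u' s) (X s ω) (Y s ω) | ℱ t] := by
  have condExp_gap : ∀ s ∈ Finset.Icc t T,
      P[fun ω => tangentGap (u s) (u' s) (X s ω) (Y s ω) | ℱ t] =ᵐ[P]
        P[fun ω => u s (X s ω) | ℱ t] + P[fun ω => u' s (X s ω) * (Y s ω - X s ω) | ℱ t]
          - P[fun ω => u s (Y s ω) | ℱ t] := by
    intro s hs
    have huX := ((hX.1 s hs).continuous_comp (hu s hs)).integrable (μ := P) (ℱ.le s)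
    have huY := ((hY.1 s hs).continuous_comp (hu s hs)).integrable (μ := P) (ℱ.le s)
    have hlinear := ((hY.1 s hs).sub (hX.1 s hs)).integrable_mul (ℱ.le s)
      (hξ.integrable_marginal hs)
    exact (condExp_sub (huX.add hlinear) huY _).trans ((condExp_add huX hlinear _).sub .rfl)
  filter_upwards [condExp_finsetSum (fun s hs => hξ.integrable_tangentGap hu hX hY hs) (ℱ t),
    eventuallyEq_sum condExp_gap, hξ.sum_condExp_marginal_mul_sub_ae_eq_zero hX hY]
    with ω hsum hgap hzero
  rw [hsum, hgap, Finset.sum_sub_distrib, Finset.sum_add_distrib, Pi.sub_apply (_ + _),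
    Pi.add_apply, hzero, Pi.zero_apply, add_zero, Finset.sum_apply, Finset.sum_apply]
  rfl

theorem utilSum1_ae_le (hξ : IsLagrangeMultiplier P ℱ u' t T X ξ)
    (hconc : ∀ s ∈ Finset.Icc t T, ConcaveOn ℝ Set.univ (u s))
    (hderiv : ∀ s ∈ Finset.Icc t T, ∀ x, HasDerivAt (u s) (u' s x) x)
    (hX : IsDiv1 P ℱ t T Z X) (hY : IsDiv1 P ℱ t T Z Y) :
    utilSum1 P ℱ u t T Y ≤ᵐ[P] utilSum1 P ℱ u t T X := by
  have hu : ∀ s ∈ Finset.Icc t T, Continuous (u s) := fun s hs =>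
    continuous_iff_continuousAt.2 fun x => (hderiv s hs x).continuousAt
  have gap_nonneg :
      0 ≤ ∑ s ∈ Finset.Icc t T, fun ω => tangentGap (u s) (u' s) (X s ω) (Y s ω) :=
    Finset.sum_nonneg fun s hs _ => tangentGap_nonneg (hconc s hs) (hderiv s hs _)
  filter_upwards [hξ.utilSum1_sub_ae_eq_condExp_sum_tangentGap hu hX hY,
    condExp_nonneg (m := ℱ t) (μ := P) (.of_forall gap_nonneg)] with ω hgap hnonneg
  exact sub_nonneg.1 (hnonneg.trans_eq hgap.symm)

theorem ae_eq_of_utilSum1_ae_le (hξ : IsLagrangeMultiplier P ℱ u' t T X ξ)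
    (hconc : ∀ s ∈ Finset.Icc t T, StrictConcaveOn ℝ Set.univ (u s))
    (hderiv : ∀ s ∈ Finset.Icc t T, ∀ x, HasDerivAt (u s) (u' s x) x)
    (hX : IsDiv1 P ℱ t T Z X) (hY : IsDiv1 P ℱ t T Z Y)
    (hle : utilSum1 P ℱ u t T X ≤ᵐ[P] utilSum1 P ℱ u t T Y) :
    ∀ s ∈ Finset.Icc t T, Y s =ᵐ[P] X s := by
  have hu : ∀ s ∈ Finset.Icc t T, Continuous (u s) := fun s hs =>
    continuous_iff_continuousAt.2 fun x => (hderiv s hs x).continuousAt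
  set G : ℕ → Ω → ℝ := fun s ω => tangentGap (u s) (u' s) (X s ω) (Y s ω)
  have gap_nonneg : ∀ s ∈ Finset.Icc t T, 0 ≤ G s := fun s hs _ =>
    tangentGap_nonneg (hconc s hs).concaveOn (hderiv s hs _)
  have condExp_nonpos : P[∑ s ∈ Finset.Icc t T, G s | ℱ t] ≤ᵐ[P] 0 := by
    filter_upwards [hξ.utilSum1_sub_ae_eq_condExp_sum_tangentGap hu hX hY, hle] with ω hgap hleω
    exact hgap.symm.trans_le (sub_nonpos.2 hleω)
  have integral_nonpos : ∫ ω, (∑ s ∈ Finset.Icc t T, G s) ω ∂P ≤ 0 := by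
    rw [← integral_condExp (ℱ.le t)]
    exact integral_nonpos_of_ae condExp_nonpos
  have sum_gap_nonneg : 0 ≤ ∑ s ∈ Finset.Icc t T, G s := Finset.sum_nonneg gap_nonneg
  have sum_gap_zero : ∑ s ∈ Finset.Icc t T, G s =ᵐ[P] 0 :=
    (integral_eq_zero_iff_of_nonneg sum_gap_nonneg
      (integrable_finsetSum' _ fun s hs => hξ.integrable_tangentGap hu hX hY hs)).1
      (integral_nonpos.antisymm (integral_nonneg sum_gap_nonneg))
  intro s hs
  filter_upwards [sum_gap_zero] with ω hω
  rw [Finset.sum_apply, Pi.zero_apply,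
    Finset.sum_eq_zero_iff_of_nonneg fun r hr => gap_nonneg r hr ω] at hω
  exact not_not.1 fun hne => (tangentGap_pos (hconc s hs) (hderiv s hs _) hne).ne' (hω s hs)

end IsLagrangeMultiplier

section ExpUtility

/-- The exponential utility `(1 - exp (-a x)) / a` with constant absolute risk aversion `a`. -/
noncomputable def expUtility (a x : ℝ) : ℝ :=
  a⁻¹ * (1 - Real.exp (-a * x))

theorem hasDerivAt_expUtility {a : ℝ} (ha : a ≠ 0) (x : ℝ) :
    HasDerivAt (expUtility a) (Real.exp (-a * x)) x := by
  have h := ((((hasDerivAt_id x).const_mul (-a)).exp).const_sub 1).const_mul a⁻¹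
  refine h.congr_deriv ?_
  simp only [id_eq]
  field_simp

theorem strictConcaveOn_expUtility {a : ℝ} (ha : 0 < a) :
    StrictConcaveOn ℝ Set.univ (expUtility a) := by
  have hderiv : deriv (expUtility a) = fun x => Real.exp (-a * x) :=
    funext fun x => (hasDerivAt_expUtility ha.ne' x).deriv
  refine StrictAnti.strictConcaveOn_univ_of_deriv (by unfold expUtility; fun_prop) ?_
  rw [hderiv]
  exact fun x y hxy => Real.exp_lt_exp.2 (mul_lt_mul_of_neg_left hxy (neg_lt_zero.2 ha))

theorem IsLagrangeMultiplier.utilSum1_expUtility_ae_eq {m0 : MeasurableSpace Ω} {P : Measure Ω}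
    [IsFiniteMeasure P] {ℱ : Filtration ℕ m0} {α : ℕ → ℝ} {t T : ℕ} {X : ℕ → Ω → ℝ} {ξ : Ω → ℝ}
    (hξ : IsLagrangeMultiplier P ℱ (fun s x => Real.exp (-α s * x)) t T X ξ) :
    utilSum1 P ℱ (fun s => expUtility (α s)) t T X =ᵐ[P]
      fun ω => (∑ s ∈ Finset.Icc t T, (α s)⁻¹) * (1 - P[ξ | ℱ t] ω) := by
  have condExp_utility : ∀ s ∈ Finset.Icc t T, P[fun ω => expUtility (α s) (X s ω) | ℱ t] =ᵐ[P]
      fun ω => (α s)⁻¹ * (1 - P[ξ | ℱ t] ω) := by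
    intro s hs
    have marginal : P[fun ω => Real.exp (-α s * X s ω) | ℱ t] =ᵐ[P] P[ξ | ℱ t] :=
      (condExp_congr_ae (hξ.condExp_ae_eq s hs).symm).trans
        (condExp_condExp_of_le (ℱ.mono (Finset.mem_Icc.1 hs).1) (ℱ.le s))
    have difference := condExp_sub (integrable_const (1 : ℝ)) (hξ.integrable_marginal hs) (ℱ t)
    rw [condExp_const (ℱ.le t)] at difference
    filter_upwards [condExp_smul (μ := P) (α s)⁻¹
      ((fun _ => 1) - fun ω => Real.exp (-α s * X s ω)) (ℱ t), difference, marginal]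
      with ω hsmul hdiff hmarg
    rw [Pi.smul_apply, hdiff, Pi.sub_apply, hmarg] at hsmul
    exact hsmul
  filter_upwards [eventuallyEq_sum condExp_utility] with ω hω
  rw [Finset.sum_apply, Finset.sum_apply, ← Finset.sum_mul] at hω
  exact hω

end ExpUtility

section WeightedPath

/-- The path started at `β t * v t` at time `t` whose increments are those of `v` weighted by `β`.
With `v = V(Z)` it is the process `α_s X̂_s(Z)`. -/
def weightedPath (β v : ℕ → ℝ) (t s : ℕ) : ℝ :=
  β t * v t + ∑ r ∈ Finset.Icc (t + 1) s, β r * (v r - v (r - 1))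

theorem weightedPath_self (β v : ℕ → ℝ) (t : ℕ) : weightedPath β v t t = β t * v t := by
  simp [weightedPath]

theorem weightedPath_succ (β v : ℕ → ℝ) {t s : ℕ} (hts : t ≤ s) :
    weightedPath β v t (s + 1) = weightedPath β v t s + β (s + 1) * (v (s + 1) - v s) := by
  rw [weightedPath, Finset.sum_Icc_succ_top (by lia), Nat.add_sub_cancel, ← add_assoc,
    ← weightedPath]

/-- The invariant behind `sum_mul_weightedPath`: freezing the path at its level at time `n` would
distribute exactly `v n`. -/
theorem sum_mul_weightedPath_add_mul_sum {a β : ℕ → ℝ} (v : ℕ → ℝ) {t n T : ℕ}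
    (hβ : ∀ r ∈ Finset.Icc t T, β r * ∑ s ∈ Finset.Icc r T, a s = 1) (htn : t ≤ n) (hnT : n ≤ T) :
    ∑ s ∈ Finset.Icc t n, a s * weightedPath β v t s
      + weightedPath β v t n * ∑ s ∈ Finset.Ioc n T, a s = v n := by
  induction n, htn using Nat.le_induction with
  | base =>
    have hβt := hβ t (Finset.mem_Icc.2 ⟨le_rfl, hnT⟩)
    rw [← Finset.add_sum_Ioc_eq_sum_Icc hnT] at hβt
    rw [Finset.Icc_self, Finset.sum_singleton, weightedPath_self]
    linear_combination v t * hβt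
  | succ n htn ih =>
    have hβn := hβ (n + 1) (Finset.mem_Icc.2 ⟨by lia, hnT⟩)
    have ih := ih (by lia)
    rw [← Finset.Icc_add_one_left_eq_Ioc] at ih
    rw [Finset.sum_Icc_succ_top (by lia), weightedPath_succ β v htn]
    rw [← Finset.add_sum_Ioc_eq_sum_Icc hnT] at hβn ih
    linear_combination ih + (v (n + 1) - v n) * hβn

theorem sum_mul_weightedPath {a β : ℕ → ℝ} (v : ℕ → ℝ) {t T : ℕ}
    (hβ : ∀ r ∈ Finset.Icc t T, β r * ∑ s ∈ Finset.Icc r T, a s = 1) (htT : t ≤ T) :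
    ∑ s ∈ Finset.Icc t T, a s * weightedPath β v t s = v T := by
  simpa using sum_mul_weightedPath_add_mul_sum v hβ htT le_rfl

theorem measBdd_weightedPath {m : MeasurableSpace Ω} (β : ℕ → ℝ) {V : ℕ → Ω → ℝ} {t s : ℕ}
    (hts : t ≤ s) (hV : ∀ r ∈ Finset.Icc t s, MeasBdd m (V r)) :
    MeasBdd m fun ω => weightedPath β (V · ω) t s := by
  induction s, hts using Nat.le_induction with
  | base =>
    simp only [weightedPath_self]
    exact (hV t (Finset.mem_Icc.2 ⟨le_rfl, le_rfl⟩)).const_mul _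
  | succ s hts ih =>
    simp only [weightedPath_succ _ _ hts]
    exact (ih fun r hr => hV r (Finset.Icc_subset_Icc_right s.le_succ hr)).add
      (((hV (s + 1) (Finset.mem_Icc.2 ⟨by lia, le_rfl⟩)).sub
        (hV s (Finset.mem_Icc.2 ⟨hts, s.le_succ⟩))).const_mul _)

end WeightedPath

section ExpDiversification

variable {m0 : MeasurableSpace Ω} {P : Measure Ω} {ℱ : Filtration ℕ m0} {t T : ℕ} {α β : ℕ → ℝ}
  {V : ℕ → Ω → ℝ}

/-- The candidate optimizer `X̂(Z)` for exponential utilities with risk aversions `α`, where `β` is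
the aggregate risk aversion and `V` stands for `V(Z)`. -/
noncomputable def expDiversification (α β : ℕ → ℝ) (V : ℕ → Ω → ℝ) (t s : ℕ) (ω : Ω) : ℝ :=
  (α s)⁻¹ * weightedPath β (V · ω) t s

theorem measBdd_weightedPath_of_adapted (hV : ∀ r ∈ Finset.Icc t T, MeasBdd (ℱ r) (V r)) {s : ℕ}
    (hs : s ∈ Finset.Icc t T) : MeasBdd (ℱ s) fun ω => weightedPath β (V · ω) t s := by
  obtain ⟨hts, hsT⟩ := Finset.mem_Icc.1 hs
  exact measBdd_weightedPath β hts fun r hr =>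
    (hV r (Finset.Icc_subset_Icc_right hsT hr)).mono (ℱ.mono (Finset.mem_Icc.1 hr).2)

theorem isDiv1_expDiversification {Z : Ω → ℝ} (htT : t ≤ T)
    (hβ : ∀ r ∈ Finset.Icc t T, β r * ∑ s ∈ Finset.Icc r T, (α s)⁻¹ = 1)
    (hV : ∀ r ∈ Finset.Icc t T, MeasBdd (ℱ r) (V r)) (hVT : V T =ᵐ[P] Z) :
    IsDiv1 P ℱ t T Z (expDiversification α β V t) := by
  refine ⟨fun s hs => (measBdd_weightedPath_of_adapted hV hs).const_mul _, ?_⟩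
  filter_upwards [hVT] with ω hω
  exact (sum_mul_weightedPath (V · ω) hβ htT).trans hω

theorem condExp_exp_neg_weightedPath_succ_ae_eq [IsFiniteMeasure P] {s : ℕ}
    (hs : s ∈ Finset.Ico t T) (hβ : β (s + 1) ≠ 0)
    (hV : ∀ r ∈ Finset.Icc t T, MeasBdd (ℱ r) (V r))
    (hiter : V s =ᵐ[P] fun ω => -(β (s + 1))⁻¹ *
      Real.log (P[fun ω' => Real.exp (-β (s + 1) * V (s + 1) ω') | ℱ s] ω)) :
    P[fun ω => Real.exp (-weightedPath β (V · ω) t (s + 1)) | ℱ s] =ᵐ[P]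
      fun ω => Real.exp (-weightedPath β (V · ω) t s) := by
  obtain ⟨hts, hsT⟩ := Finset.mem_Ico.1 hs
  have hs' : s ∈ Finset.Icc t T := Finset.Ico_subset_Icc_self hs
  simp only [weightedPath_succ _ _ hts]
  exact condExp_exp_neg_add_mul_sub_ae_eq (ℱ.le s) hβ (measBdd_weightedPath_of_adapted hV hs')
    (hV s hs') ((hV (s + 1) (Finset.mem_Icc.2 ⟨by lia, hsT⟩)).mono (ℱ.le _)) hiter

theorem isLagrangeMultiplier_expDiversification [IsFiniteMeasure P] (htT : t ≤ T)
    (hα : ∀ s ∈ Finset.Icc t T, α s ≠ 0) (hβ : ∀ s ∈ Finset.Ioc t T, β s ≠ 0)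
    (hV : ∀ r ∈ Finset.Icc t T, MeasBdd (ℱ r) (V r))
    (hiter : ∀ s ∈ Finset.Ico t T, V s =ᵐ[P] fun ω => -(β (s + 1))⁻¹ *
      Real.log (P[fun ω' => Real.exp (-β (s + 1) * V (s + 1) ω') | ℱ s] ω)) :
    IsLagrangeMultiplier P ℱ (fun s x => Real.exp (-α s * x)) t T (expDiversification α β V t)
      fun ω => Real.exp (-weightedPath β (V · ω) t T) := by
  have hterminal : MeasBdd (ℱ T) fun ω => Real.exp (-weightedPath β (V · ω) t T) :=
    (measBdd_weightedPath_of_adapted hV (Finset.right_mem_Icc.2 htT)).continuous_comp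
      (f := fun x => Real.exp (-x)) (by fun_prop)
  have hint := hterminal.integrable (μ := P) (ℱ.le T)
  refine ⟨hint, fun s hs => ?_⟩
  have marginal : ∀ ω, -α s * expDiversification α β V t s ω = -weightedPath β (V · ω) t s :=
    fun ω => by rw [expDiversification, neg_mul, mul_inv_cancel_left₀ (hα s hs)]
  simp only [marginal]
  refine condExp_terminal_ae_eq_of_condExp_succ
    (M := fun s ω => Real.exp (-weightedPath β (V · ω) t s))
    hterminal.1.stronglyMeasurable hint (fun r hr => ?_) hs
  exact condExp_exp_neg_weightedPath_succ_ae_eq hr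
    (hβ _ (by simp only [Finset.mem_Ioc, Finset.mem_Ico] at hr ⊢; lia)) hV (hiter r hr)

end ExpDiversification

/-- Theorem 2.23: in the exponential case, the explicitly given process
`(X̂_s(Z))` is the unique maximizer of the diversification problem, and
`U_t(Z) = (1/β_t)(1 − exp(−β_t V_t(Z)))` a.s. -/
theorem exponential_optimal_diversification
    {m0 : MeasurableSpace Ω} (P : Measure Ω) [IsProbabilityMeasure P]
    (ℱ : Filtration ℕ m0) (T t : ℕ) (hT : 0 < T) (ht : t ≤ T)
    (α : ℕ → ℝ) (hα : ∀ s, 0 < α s)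
    -- exponential utilities:
    (u : ℕ → ℝ → ℝ) (hu : ∀ s, u s = fun x => (α s)⁻¹ * (1 - Real.exp (-(α s) * x)))
    -- modified risk aversion `1/β_r = Σ_{s=r}^T 1/α_s`:
    (β : ℕ → ℝ) (hβpos : ∀ r, r ≤ T → 0 < β r)
    (hβ : ∀ r, r ≤ T → (β r)⁻¹ = ∑ s ∈ Finset.Icc r T, (α s)⁻¹)
    (Z : Ω → ℝ) (hZ : MeasBdd (ℱ T) Z)
    -- the adapted process `(V_r(Z))` defined by the backward iteration:
    (V : ℕ → Ω → ℝ) (hVadapted : ∀ r, r ≤ T → MeasBdd (ℱ r) (V r))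
    (hVT : V T =ᵐ[P] Z)
    (hViter : ∀ r, r < T → V r =ᵐ[P] fun ω =>
      -(β (r + 1))⁻¹ *
        Real.log ((P[fun ω' => Real.exp (-(β (r + 1)) * V (r + 1) ω') | ℱ r]) ω)) :
    -- `X̂` as in (2.16.5):
    ∀ Xhat : ℕ → Ω → ℝ,
      (∀ s ω, Xhat s ω = (α s)⁻¹ *
        (β t * V t ω + ∑ r ∈ Finset.Icc (t + 1) s, β r * (V r ω - V (r - 1) ω))) →
      -- `X̂` is a diversification of `Z` …
      IsDiv1 P ℱ t T Z Xhat ∧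
      -- … attaining the essential supremum …
      (∀ Y : ℕ → Ω → ℝ, IsDiv1 P ℱ t T Z Y →
        utilSum1 P ℱ u t T Y ≤ᵐ[P] utilSum1 P ℱ u t T Xhat) ∧
      -- … uniquely so (up to a.s. equality):
      (∀ X' : ℕ → Ω → ℝ, IsDiv1 P ℱ t T Z X' →
        (∀ Y : ℕ → Ω → ℝ, IsDiv1 P ℱ t T Z Y →
          utilSum1 P ℱ u t T Y ≤ᵐ[P] utilSum1 P ℱ u t T X') →
        ∀ s ∈ Finset.Icc t T, X' s =ᵐ[P] Xhat s) ∧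
      -- and the value of `U_t(Z)`:
      utilSum1 P ℱ u t T Xhat =ᵐ[P]
        fun ω => (β t)⁻¹ * (1 - Real.exp (-(β t) * V t ω)) := by
  intro Xhat hX
  obtain rfl : u = fun s => expUtility (α s) := funext hu
  obtain rfl : Xhat = expDiversification α β V t := funext fun s => funext (hX s)
  have hV : ∀ r ∈ Finset.Icc t T, MeasBdd (ℱ r) (V r) := fun r hr =>
    hVadapted r (Finset.mem_Icc.1 hr).2
  have hβα : ∀ r ∈ Finset.Icc t T, β r * ∑ s ∈ Finset.Icc r T, (α s)⁻¹ = 1 := fun r hr => by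
    have hrT := (Finset.mem_Icc.1 hr).2
    rw [← hβ r hrT, mul_inv_cancel₀ (hβpos r hrT).ne']
  have hdiv := isDiv1_expDiversification ht hβα hV hVT
  have hmult := isLagrangeMultiplier_expDiversification ht (fun s _ => (hα s).ne')
    (fun s hs => (hβpos s (Finset.mem_Ioc.1 hs).2).ne') hV
    fun s hs => hViter s (Finset.mem_Ico.1 hs).2
  have hconc := fun s (_ : s ∈ Finset.Icc t T) => strictConcaveOn_expUtility (hα s)
  have hderiv := fun s (_ : s ∈ Finset.Icc t T) => hasDerivAt_expUtility (hα s).ne'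
  refine ⟨hdiv,
    fun Y hY => hmult.utilSum1_ae_le (fun s hs => (hconc s hs).concaveOn) hderiv hdiv hY,
    fun Y hY hmax => hmult.ae_eq_of_utilSum1_ae_le hconc hderiv hdiv hY (hmax _ hdiv), ?_⟩
  filter_upwards [hmult.utilSum1_expUtility_ae_eq,
    hmult.condExp_ae_eq t (Finset.left_mem_Icc.2 ht)] with ω hvalue hinitial
  rw [hvalue, hinitial, ← hβ t ht, expDiversification, weightedPath_self, neg_mul, neg_mul,
    mul_inv_cancel_left₀ (hα t).ne']
end
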